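/- For every ε ∈ (0, 1) there exist a complete geodesic metric measure space (X, d, μ) with μ Borel-regular that is Ahlfors 3-regular and supports a weak (1+ε)-Poincaré inequality, a domain G ⊂ X with compact closure, and disjoint continua E, F ⊂ G each containing at least two points, such that 0 < mod_3 Γ(E, F; G) < ∞ while the family Γ*(E, F; G) admits no admissible function, so that mod_{3/2} Γ*(E, F; G) = ∞. In particular, the duality upper bound (mod_3 Γ)^{1/3} (mod_{3/2} Γ*)^{2/3} ≤ C fails for every finite C, and X does not support a weak 1-Poincaré inequality. -/

import Mathlib

open MeasureTheory Metric Set ENNReal NNReal Filter Topology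

noncomputable section

variable {X : Type*}

/-- A measure is Borel-regular: every set is contained in a Borel set of the same measure. -/
def BorelRegular [MeasurableSpace X] (μ : Measure X) : Prop :=
  ∀ s : Set X, ∃ t : Set X, MeasurableSet t ∧ s ⊆ t ∧ μ t = μ s

/-- μ is doubling with constant `Cμ`: `0 < μ(2B) ≤ Cμ μ(B) < ∞` for all balls. -/
def IsDoublingWith [PseudoMetricSpace X] [MeasurableSpace X] (μ : Measure X) (Cμ : ℝ) : Prop :=
  ∀ (x : X) (r : ℝ), 0 < r →
    0 < μ (ball x (2 * r)) ∧ μ (ball x (2 * r)) ≤ ENNReal.ofReal Cμ * μ (ball x r) ∧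
      μ (ball x r) < ⊤

/-- `ρ` is an upper gradient of `u` on the set `V`: for every `L ≥ 0` and every
1-Lipschitz curve `γ : [0, L] → V`, `|u(γ L) − u(γ 0)| ≤ ∫₀^L ρ(γ t) dt`. -/
def IsUpperGradientOn [PseudoMetricSpace X] (u : X → ℝ) (ρ : X → ℝ≥0∞) (V : Set X) : Prop :=
  ∀ L : ℝ, 0 ≤ L → ∀ γ : ℝ → X, LipschitzOnWith 1 γ (Icc 0 L) → MapsTo γ (Icc 0 L) V →
    ENNReal.ofReal |u (γ L) - u (γ 0)| ≤ ∫⁻ t in Icc 0 L, ρ (γ t)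

/-- `X` supports a weak `p`-Poincaré inequality with constants `CP`, `lP`. -/
def WeakPoincare [PseudoMetricSpace X] [MeasurableSpace X] (μ : Measure X)
    (p CP lP : ℝ) : Prop :=
  ∀ u : X → ℝ, LocallyIntegrable u μ →
    ∀ ρ : X → ℝ≥0∞, Measurable ρ → IsUpperGradientOn u ρ univ →
    ∀ (x : X) (r : ℝ), 0 < r →
      ENNReal.ofReal (⨍ y in ball x r, |u y - ⨍ z in ball x r, u z ∂μ| ∂μ) ≤
        ENNReal.ofReal (CP * diam (ball x r)) *
          (⨍⁻ y in ball x (lP * r), ρ y ^ p ∂μ) ^ (1 / p)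

/-- `X` is Ahlfors `Q`-regular with constants `0 < a ≤ A`. -/
def AhlforsRegular [PseudoMetricSpace X] [MeasurableSpace X] (μ : Measure X)
    (Q a A : ℝ) : Prop :=
  0 < a ∧ a ≤ A ∧ ∀ (x : X) (r : ℝ), 0 < r → ENNReal.ofReal r < EMetric.diam (univ : Set X) →
    ENNReal.ofReal (a * r ^ Q) ≤ μ (ball x r) ∧ μ (ball x r) ≤ ENNReal.ofReal (A * r ^ Q)

/-- `ρ` is admissible for a family `M` of Borel measures: `∫ ρ dν ≥ 1` for all `ν ∈ M`. -/
def Admissible [MeasurableSpace X] (M : Set (Measure X)) (ρ : X → ℝ≥0∞) : Prop :=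
  Measurable ρ ∧ ∀ ν ∈ M, 1 ≤ ∫⁻ x, ρ x ∂ν

/-- The `q`-modulus of a family of Borel measures. -/
def modulus [MeasurableSpace X] (μ : Measure X) (q : ℝ) (M : Set (Measure X)) : ℝ≥0∞ :=
  ⨅ (ρ : X → ℝ≥0∞) (_ : Admissible M ρ), ∫⁻ x, ρ x ^ q ∂μ

/-- `ρ` is `q`-weakly admissible for `M`. -/
def WeaklyAdmissible [MeasurableSpace X] (μ : Measure X) (q : ℝ) (M : Set (Measure X))
    (ρ : X → ℝ≥0∞) : Prop :=
  ∃ N ⊆ M, modulus μ q N = 0 ∧ Admissible (M \ N) ρ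

/-- The family `Γ(E, F; G)` of measures `H¹` restricted to images of injective rectifiable
curves joining `E` and `F` in `G`. -/
def pathFamily [MetricSpace X] [MeasurableSpace X] [BorelSpace X] (E F G : Set X) :
    Set (Measure X) :=
  {ν | ∃ γ : ℝ → X, ContinuousOn γ (Icc 0 1) ∧ InjOn γ (Icc 0 1) ∧
    eVariationOn γ (Icc 0 1) ≠ ⊤ ∧ MapsTo γ (Icc 0 1) G ∧ γ 0 ∈ E ∧ γ 1 ∈ F ∧
    ν = (μH[1]).restrict (γ '' Icc 0 1)}

/-- `S` separates `E` from `F` in `G`: they lie in different connected components of `G \ S`. -/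
def SeparatesIn [TopologicalSpace X] (S E F G : Set X) : Prop :=
  ∃ x ∈ G \ S, ∃ y ∈ G \ S,
    E ⊆ connectedComponentIn (G \ S) x ∧ F ⊆ connectedComponentIn (G \ S) y ∧
    connectedComponentIn (G \ S) x ≠ connectedComponentIn (G \ S) y

/-- The family `Γ*(E, F; G)` of measures `H^d` restricted to `S ∩ G`, where `S` ranges over
compact subsets of the closure of `G`, of finite `H^d`-measure in `G`, separating `E` and `F`. -/
def surfaceFamilyH [MetricSpace X] [MeasurableSpace X] [BorelSpace X] (d : ℝ)
    (E F G : Set X) : Set (Measure X) :=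
  {ν | ∃ S : Set X, IsCompact S ∧ S ⊆ closure G ∧ μH[d] (S ∩ G) ≠ ⊤ ∧
    SeparatesIn S E F G ∧ ν = (μH[d]).restrict (S ∩ G)}

/-- The codimension-1 spherical Hausdorff measure associated to `μ`. -/
def codimOneHausdorff [PseudoMetricSpace X] [MeasurableSpace X] (μ : Measure X)
    (A : Set X) : ℝ≥0∞ :=
  ⨆ (δ : ℝ) (_ : 0 < δ),
    ⨅ (c : ℕ → X) (r : ℕ → ℝ) (_ : A ⊆ ⋃ i, ball (c i) (r i))
      (_ : ∀ i, 0 < r i ∧ r i ≤ δ), ∑' i, μ (ball (c i) (r i)) / ENNReal.ofReal (r i)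

/-- The integral `∫_A g d𝓗` of `g` over `A` against the codimension-1 spherical Hausdorff
measure, defined by the layer-cake formula. -/
def codimIntegral [PseudoMetricSpace X] [MeasurableSpace X] (μ : Measure X) (A : Set X)
    (g : X → ℝ≥0∞) : ℝ≥0∞ :=
  ∫⁻ s in Ioi (0 : ℝ), codimOneHausdorff μ (A ∩ {x | ENNReal.ofReal s < g x})

/-- The collection of "surfaces" of `Γ*(E, F; G)`: compact subsets of the closure of `G` of
finite codimension-1 measure in `G` separating `E` and `F` in `G`. -/
def surfaceSets [PseudoMetricSpace X] [MeasurableSpace X] (μ : Measure X) (E F G : Set X) :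
    Set (Set X) :=
  {S | IsCompact S ∧ S ⊆ closure G ∧ codimOneHausdorff μ (S ∩ G) ≠ ⊤ ∧ SeparatesIn S E F G}

/-- The `q`-modulus of a family `𝒮` of surfaces, each equipped with the codimension-1
spherical Hausdorff measure restricted to `S ∩ G`. -/
def surfModulus [PseudoMetricSpace X] [MeasurableSpace X] (μ : Measure X) (q : ℝ)
    (𝒮 : Set (Set X)) (G : Set X) : ℝ≥0∞ :=
  ⨅ (ρ : X → ℝ≥0∞)
    (_ : Measurable ρ ∧ ∀ S ∈ 𝒮, 1 ≤ codimIntegral μ (S ∩ G) ρ),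
    ∫⁻ x, ρ x ^ q ∂μ

/-- The upper Lebesgue integral of `f` over `s ⊆ ℝ`. -/
def upperIntegralOn (s : Set ℝ) (f : ℝ → ℝ≥0∞) : ℝ≥0∞ :=
  ⨅ (ψ : ℝ → ℝ≥0∞) (_ : Measurable ψ ∧ ∀ t, f t ≤ ψ t), ∫⁻ t in s, ψ t

/-- The restricted Hardy–Littlewood maximal function `M_R w`. -/
def restrMaximal [PseudoMetricSpace X] [MeasurableSpace X] (μ : Measure X) (R : ℝ)
    (w : X → ℝ≥0∞) (x : X) : ℝ≥0∞ :=
  ⨆ (r : ℝ) (_ : 0 < r ∧ r ≤ R), ⨍⁻ y in ball x r, w y ∂μ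

/-- `x` is a Lebesgue point of `v`. -/
def LebesguePoint [PseudoMetricSpace X] [MeasurableSpace X] (μ : Measure X) (v : X → ℝ)
    (x : X) : Prop :=
  Tendsto (fun r : ℝ => ⨍ y in ball x r, |v y - v x| ∂μ) (𝓝[>] 0) (𝓝 0)

/-- `u` is locally Lipschitz on `G`. -/
def IsLocallyLipschitzOn [PseudoMetricSpace X] (u : X → ℝ) (G : Set X) : Prop :=
  ∀ x ∈ G, ∃ (K : ℝ≥0) (t : Set X), t ∈ 𝓝[G] x ∧ LipschitzOnWith K u t

/-- `X` is a geodesic metric space. -/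
def IsGeodesicSpace (X : Type*) [MetricSpace X] : Prop :=
  ∀ x y : X, ∃ γ : ℝ → X, γ 0 = x ∧ γ (dist x y) = y ∧
    ∀ s ∈ Icc (0 : ℝ) (dist x y), ∀ t ∈ Icc (0 : ℝ) (dist x y), dist (γ s) (γ t) = |s - t|

/-- `G` is a domain (open connected set) with compact closure. -/
def IsDomainWithCompactClosure [TopologicalSpace X] (G : Set X) : Prop :=
  IsOpen G ∧ IsConnected G ∧ IsCompact (closure G)

/-- `E` is a nondegenerate continuum: compact, connected, with at least two points. -/
def IsNondegContinuum [TopologicalSpace X] (E : Set X) : Prop :=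
  IsCompact E ∧ IsConnected E ∧ E.Nontrivial

/-- The distance between two sets. -/
def setDist [PseudoMetricSpace X] (E F : Set X) : ℝ :=
  sInf ((fun p : X × X => dist p.1 p.2) '' (E ×ˢ F))

/-- The `s`-dimensional Hausdorff content. -/
def hContent {Y : Type*} [EMetricSpace Y] (s : ℝ) (E : Set Y) : ℝ≥0∞ :=
  ⨅ (U : ℕ → Set Y) (_ : E ⊆ ⋃ i, U i), ∑' i, EMetric.diam (U i) ^ s

end

/-!
The space is the double of `ℝ³` (with the sup norm) along a closed self-similar dust `K` whose
dimension lies strictly between `2 - ε` and `2`; the two plates of the condenser lie in different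
copies.

Dimension less than `2` means that `H²(K) = 0` and that bounded pieces of the `r`-neighbourhood of
`K` have volume `o(r)`. A compact piece of `K` separates the two plates, so the surface family
contains the zero measure and admits nothing. A function rising from `0` to `1` across the
`r`-neighbourhood of `K` in one copy and vanishing on the other violates the weak `1`-Poincaré
inequality as `r → 0`.

Dimension greater than `3 - p` means that `K` carries Frostman measures `ν` of some exponent
`t > 3 - p`. Join the two copies by pairs of segments through a `ν`-random point `k`. Shrinking a
unit ball towards `k` by the factor `τ` multiplies volumes by `τ³`, while a given point lies in the
shrunken ball only for `k` in a set of `ν`-measure at most `C τᵗ`. By Hölder's inequality the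
average over `k` of the integrals of `g` along the segments is then at most a multiple of
`∫₀¹ τ^((t - 3) / p) dτ < ∞` times the `Lᵖ` norm of `g`. With `p = 1 + ε` this gives the weak
Poincaré inequality, and with `p = 3` a lower bound for the path modulus.
-/

section Modulus

lemma borelRegular {X : Type*} [MeasurableSpace X] (μ : Measure X) : BorelRegular μ := fun s =>
  ⟨toMeasurable μ s, measurableSet_toMeasurable μ s, subset_toMeasurable μ s,
    measure_toMeasurable s⟩

lemma modulus_eq_top_of_not_exists_admissible {X : Type*} [MeasurableSpace X]
    {M : Set (Measure X)} (h : ¬ ∃ ρ : X → ℝ≥0∞, Admissible M ρ) (μ : Measure X) (q : ℝ) :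
    modulus μ q M = ⊤ := by
  simp only [modulus, iInf_eq_top]
  exact fun ρ hρ => absurd ⟨ρ, hρ⟩ h

variable {X : Type*} [MetricSpace X] [MeasurableSpace X] [BorelSpace X]

lemma not_exists_admissible_surfaceFamilyH {d : ℝ} {E F G S : Set X} (hS : IsCompact S)
    (hSG : S ⊆ closure G) (hsep : SeparatesIn S E F G) (h0 : μH[d] (S ∩ G) = 0) :
    ¬ ∃ ρ : X → ℝ≥0∞, Admissible (surfaceFamilyH d E F G) ρ := by
  rintro ⟨ρ, -, hρ⟩
  have h := hρ _ ⟨S, hS, hSG, by simp [h0], hsep, rfl⟩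
  simp [setLIntegral_measure_zero _ _ h0] at h

lemma ofReal_sub_le_hausdorffMeasure {f : X → ℝ} (hf : LipschitzWith 1 f) {S : Set X}
    (hS : IsPreconnected S) {x y : X} (hx : x ∈ S) (hy : y ∈ S) :
    ENNReal.ofReal (f y - f x) ≤ μH[1] S := by
  have hsub : Icc (f x) (f y) ⊆ f '' S :=
    (hS.image f hf.continuous.continuousOn).Icc_subset ⟨x, hx, rfl⟩ ⟨y, hy, rfl⟩
  calc ENNReal.ofReal (f y - f x) = μH[1] (Icc (f x) (f y)) := by
        rw [hausdorffMeasure_real, Real.volume_Icc]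
    _ ≤ μH[1] (f '' S) := measure_mono hsub
    _ ≤ μH[1] S := by simpa using hf.hausdorffMeasure_image_le zero_le_one S

lemma modulus_pathFamily_ne_top {μ : Measure X} {q a b : ℝ} {E F G : Set X} {f : X → ℝ}
    (hf : LipschitzWith 1 f) (hE : ∀ x ∈ E, f x ≤ a) (hF : ∀ x ∈ F, b ≤ f x) (hab : a < b)
    (hG : MeasurableSet G) (hμ : μ G ≠ ⊤) (hq : 0 < q) :
    modulus μ q (pathFamily E F G) ≠ ⊤ := by
  set c : ℝ≥0∞ := (ENNReal.ofReal (b - a))⁻¹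
  have hba : ENNReal.ofReal (b - a) ≠ 0 := by simpa using hab
  have hadm : Admissible (pathFamily E F G) (G.indicator fun _ => c) := by
    refine ⟨measurable_const.indicator hG, ?_⟩
    rintro _ ⟨γ, hγ, -, -, hγG, h0, h1, rfl⟩
    have hlen : ENNReal.ofReal (b - a) ≤ μH[1] (γ '' Icc 0 1) :=
      (ENNReal.ofReal_le_ofReal (sub_le_sub (hF _ h1) (hE _ h0))).trans <|
        ofReal_sub_le_hausdorffMeasure hf (isPreconnected_Icc.image γ hγ)
          (mem_image_of_mem γ (left_mem_Icc.2 zero_le_one))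
          (mem_image_of_mem γ (right_mem_Icc.2 zero_le_one))
    rw [lintegral_indicator_const hG, Measure.restrict_apply hG,
      inter_eq_right.2 hγG.image_subset, ← ENNReal.inv_mul_cancel hba ENNReal.ofReal_ne_top]
    gcongr
  refine ne_top_of_le_ne_top ?_ (iInf₂_le _ hadm)
  have hpow : ∀ x, G.indicator (fun _ => c) x ^ q = G.indicator (fun _ => c ^ q) x := fun x => by
    by_cases hx : x ∈ G <;> simp [hx, hq]
  simp only [hpow, lintegral_indicator_const hG]
  exact ENNReal.mul_ne_top
    (ENNReal.rpow_ne_top_of_nonneg hq.le (ENNReal.inv_ne_top.2 hba)) hμ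

end Modulus

section Oscillation

variable {X : Type*} [MeasurableSpace X] {μ : Measure X}

lemma lintegral_le_rpow_lintegral_rpow_mul {p : ℝ} (hp : 1 ≤ p) {f : X → ℝ≥0∞}
    (hf : AEMeasurable f μ) :
    ∫⁻ x, f x ∂μ ≤ (∫⁻ x, f x ^ p ∂μ) ^ (1 / p) * μ univ ^ (1 - 1 / p) := by
  simpa [eLpNorm'] using
    eLpNorm'_le_eLpNorm'_mul_rpow_measure_univ one_pos hp hf.aestronglyMeasurable

lemma ofReal_integral_abs_sub_integral_le [IsProbabilityMeasure μ] {u : X → ℝ}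
    (hu : Integrable u μ) (c : ℝ) :
    ENNReal.ofReal (∫ x, |u x - ∫ z, u z ∂μ| ∂μ) ≤ 2 * ∫⁻ x, ENNReal.ofReal |u x - c| ∂μ := by
  have hc : Integrable (fun x => |u x - c|) μ := (hu.sub (integrable_const c)).abs
  have hmean : |c - ∫ z, u z ∂μ| ≤ ∫ x, |u x - c| ∂μ := by
    have : c - ∫ z, u z ∂μ = ∫ z, (c - u z) ∂μ := by
      rw [integral_sub (integrable_const c) hu]; simp
    simpa only [this, abs_sub_comm c] using abs_integral_le_integral_abs (f := fun z => c - u z)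
  have hle : ∫ x, |u x - ∫ z, u z ∂μ| ∂μ ≤ 2 * ∫ x, |u x - c| ∂μ := by
    calc ∫ x, |u x - ∫ z, u z ∂μ| ∂μ ≤ ∫ x, (|u x - c| + |c - ∫ z, u z ∂μ|) ∂μ :=
          integral_mono (hu.sub (integrable_const _)).abs (hc.add (integrable_const _))
            fun x => abs_sub_le _ _ _
      _ = ∫ x, |u x - c| ∂μ + |c - ∫ z, u z ∂μ| := by
          rw [integral_add hc (integrable_const _)]; simp
      _ ≤ 2 * ∫ x, |u x - c| ∂μ := by linarith
  rw [← ofReal_integral_eq_lintegral_ofReal hc (ae_of_all _ fun _ => abs_nonneg _),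
    ← ENNReal.ofReal_ofNat 2, ← ENNReal.ofReal_mul zero_le_two]
  exact ENNReal.ofReal_le_ofReal hle

lemma ofReal_average_abs_sub_average_le {B : Set X} (h0 : μ B ≠ 0) (htop : μ B ≠ ⊤) {u : X → ℝ}
    (hu : IntegrableOn u B μ) (c : ℝ) :
    ENNReal.ofReal (⨍ y in B, |u y - ⨍ z in B, u z ∂μ| ∂μ) ≤
      2 * ((μ B)⁻¹ * ∫⁻ x in B, ENNReal.ofReal |u x - c| ∂μ) := by
  have : IsProbabilityMeasure ((μ B)⁻¹ • μ.restrict B) :=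
    ⟨by simp [ENNReal.inv_mul_cancel h0 htop]⟩
  have h := ofReal_integral_abs_sub_integral_le (hu.smul_measure (ENNReal.inv_ne_top.2 h0)) c
  rw [lintegral_smul_measure, smul_eq_mul] at h
  simpa [average] using h

lemma ofReal_average_abs_sub_average_le_laverage {p : ℝ} (hp : 1 ≤ p) {B B' : Set X}
    (hBB' : B ⊆ B') (h0 : μ B ≠ 0) (htop : μ B' ≠ ⊤) {A M : ℝ≥0∞} (hA : μ B' ≤ A * μ B)
    {u : X → ℝ} (hu : IntegrableOn u B μ) (c : ℝ) {ρ : X → ℝ≥0∞}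
    (hM : ∫⁻ x in B, ENNReal.ofReal |u x - c| ∂μ ≤
      M * ((∫⁻ x in B', ρ x ^ p ∂μ) ^ (1 / p) * μ B' ^ (1 - 1 / p))) :
    ENNReal.ofReal (⨍ y in B, |u y - ⨍ z in B, u z ∂μ| ∂μ) ≤
      2 * A * M * (⨍⁻ x in B', ρ x ^ p ∂μ) ^ (1 / p) := by
  have hB : μ B ≠ ⊤ := ne_top_of_le_ne_top htop (measure_mono hBB')
  have hB'0 : μ B' ≠ 0 := fun h => h0 (measure_mono_null hBB' h)
  have h1p : 1 / p ≤ 1 := by rw [one_div]; exact inv_le_one_of_one_le₀ hp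
  set avg := ⨍⁻ x in B', ρ x ^ p ∂μ with havg
  have hint : (∫⁻ x in B', ρ x ^ p ∂μ) ^ (1 / p) * μ B' ^ (1 - 1 / p) =
      avg ^ (1 / p) * μ B' := by
    rw [← ENNReal.div_mul_cancel (b := ∫⁻ x in B', ρ x ^ p ∂μ) hB'0 htop, ← setLAverage_eq, ← havg,
      ENNReal.mul_rpow_of_nonneg _ _ (by positivity), mul_assoc,
      ← ENNReal.rpow_add_of_nonneg _ _ (by positivity) (by linarith), add_sub_cancel,
      ENNReal.rpow_one]
  calc _ ≤ 2 * ((μ B)⁻¹ * ∫⁻ x in B, ENNReal.ofReal |u x - c| ∂μ) :=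
        ofReal_average_abs_sub_average_le h0 hB hu c
    _ ≤ 2 * ((μ B)⁻¹ * (M * (avg ^ (1 / p) * (A * μ B)))) := by
        rw [hint] at hM
        gcongr
        exact hM.trans (by gcongr)
    _ = 2 * A * M * avg ^ (1 / p) * ((μ B)⁻¹ * μ B) := by ring
    _ = 2 * A * M * avg ^ (1 / p) := by rw [ENNReal.inv_mul_cancel h0 hB, mul_one]

lemma le_average_abs_sub {B A₀ A₁ : Set X} (hA₀ : MeasurableSet A₀) (hA₁ : MeasurableSet A₁)
    (hA₀B : A₀ ⊆ B) (hA₁B : A₁ ⊆ B) (h0 : μ B ≠ 0) (htop : μ B ≠ ⊤) {u : X → ℝ}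
    (hu : IntegrableOn u B μ) (hu₀ : ∀ x ∈ A₀, u x = 0) (hu₁ : ∀ x ∈ A₁, u x = 1) {θ : ℝ}
    (hθ₀ : θ * μ.real B ≤ μ.real A₀) (hθ₁ : θ * μ.real B ≤ μ.real A₁) (m : ℝ) :
    θ ≤ ⨍ x in B, |u x - m| ∂μ := by
  have hint : IntegrableOn (fun x => |u x - m|) B μ := (hu.sub (integrableOn_const htop)).abs
  have hdisj : Disjoint A₀ A₁ := disjoint_left.2 fun x h h' => by
    simpa [hu₀ x h] using hu₁ x h'
  have hB : 0 < μ.real B := ENNReal.toReal_pos h0 htop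
  have hm : 1 ≤ |m| + |1 - m| := by simpa using abs_add_le m (1 - m)
  have key : θ * μ.real B ≤ ∫ x in B, |u x - m| ∂μ :=
    calc θ * μ.real B ≤ μ.real A₀ * |m| + μ.real A₁ * |1 - m| := by
          rcases le_total θ 0 with h | h
          · exact (mul_nonpos_of_nonpos_of_nonneg h hB.le).trans (by positivity)
          · nlinarith [abs_nonneg m, abs_nonneg (1 - m), mul_nonneg h hB.le]
      _ = ∫ x in A₀ ∪ A₁, |u x - m| ∂μ := by
          rw [setIntegral_union hdisj hA₁ (hint.mono_set hA₀B) (hint.mono_set hA₁B),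
            setIntegral_congr_fun (g := fun _ => |m|) hA₀ fun x hx => by simp [hu₀ x hx],
            setIntegral_congr_fun (g := fun _ => |1 - m|) hA₁ fun x hx => by simp [hu₁ x hx]]
          simp
      _ ≤ ∫ x in B, |u x - m| ∂μ :=
          setIntegral_mono_set hint (ae_of_all _ fun _ => abs_nonneg _)
            (union_subset hA₀B hA₁B).eventuallyLE
  rwa [setAverage_eq, smul_eq_mul, inv_mul_eq_div, le_div_iff₀ hB]

lemma mul_min_le_setLIntegral_add_setLIntegral {Y : Type*} [MeasurableSpace Y] {ν : Measure Y}
    {A : Set X} {B : Set Y} (hA : MeasurableSet A) (hB : MeasurableSet B) {f : X → ℝ≥0∞}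
    {g : Y → ℝ≥0∞} {c : ℝ≥0∞} (h : ∀ x ∈ A, ∀ y ∈ B, c ≤ f x + g y) :
    c * min (μ A) (ν B) ≤ ∫⁻ x in A, f x ∂μ + ∫⁻ y in B, g y ∂ν := by
  calc c * min (μ A) (ν B)
      ≤ ((⨅ x ∈ A, f x) + ⨅ y ∈ B, g y) * min (μ A) (ν B) := by
        gcongr
        exact le_iInf₂_add_iInf₂ h
    _ ≤ (⨅ x ∈ A, f x) * μ A + (⨅ y ∈ B, g y) * ν B := by
        rw [add_mul]
        gcongr
        exacts [min_le_left _ _, min_le_right _ _]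
    _ ≤ ∫⁻ x in A, f x ∂μ + ∫⁻ y in B, g y ∂ν := by
        rw [← setLIntegral_const, ← setLIntegral_const]
        exact add_le_add (setLIntegral_mono' hA fun x hx => iInf₂_le x hx)
          (setLIntegral_mono' hB fun y hy => iInf₂_le y hy)

end Oscillation

section LipschitzCurves

lemma lipschitzOnWith_ite_le {X : Type*} [PseudoMetricSpace X] {K : ℝ≥0} {f g : ℝ → X} {a b c : ℝ}
    (hf : LipschitzOnWith K f (Icc a b)) (hg : LipschitzOnWith K g (Icc b c))
    (hfg : f b = g b) :
    LipschitzOnWith K (fun t => if t ≤ b then f t else g t) (Icc a c) := by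
  suffices h : ∀ s ∈ Icc a c, ∀ t ∈ Icc a c, s ≤ t →
      dist (if s ≤ b then f s else g s) (if t ≤ b then f t else g t) ≤ K * dist s t by
    refine LipschitzOnWith.of_dist_le_mul fun s hs t ht => ?_
    rcases le_total s t with hst | hts
    · exact h s hs t ht hst
    · rw [dist_comm, dist_comm s]
      exact h t ht s hs hts
  intro s hs t ht hst
  rcases le_or_gt t b with htb | htb
  · rw [if_pos (hst.trans htb), if_pos htb]
    exact hf.dist_le_mul _ ⟨hs.1, hst.trans htb⟩ _ ⟨ht.1, htb⟩
  rcases le_or_gt s b with hsb | hsb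
  · rw [if_pos hsb, if_neg htb.not_ge]
    calc dist (f s) (g t) ≤ dist (f s) (f b) + dist (g b) (g t) := by
          rw [← hfg]; exact dist_triangle _ _ _
      _ ≤ K * dist s b + K * dist b t :=
          add_le_add (hf.dist_le_mul _ ⟨hs.1, hsb⟩ _ ⟨hs.1.trans hsb, le_rfl⟩)
            (hg.dist_le_mul _ ⟨le_rfl, htb.le.trans ht.2⟩ _ ⟨htb.le, ht.2⟩)
      _ = K * dist s t := by
          rw [Real.dist_eq, Real.dist_eq, Real.dist_eq, abs_of_nonpos (by linarith),
            abs_of_nonpos (by linarith), abs_of_nonpos (by linarith)]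
          ring
  · rw [if_neg hsb.not_ge, if_neg htb.not_ge]
    exact hg.dist_le_mul _ ⟨hsb.le, hs.2⟩ _ ⟨htb.le, ht.2⟩

variable {X : Type*} [MetricSpace X]

/-- The points `x` and `y` are joined by a geodesic segment; `IsGeodesicSpace X` says that any two
points of `X` are. -/
def JoinedByGeodesic (x y : X) : Prop :=
  ∃ γ : ℝ → X, γ 0 = x ∧ γ (dist x y) = y ∧
    ∀ s ∈ Icc (0 : ℝ) (dist x y), ∀ t ∈ Icc (0 : ℝ) (dist x y), dist (γ s) (γ t) = |s - t|

namespace JoinedByGeodesic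

lemma of_lipschitzOnWith {x y : X} {γ : ℝ → X} (h0 : γ 0 = x) (h1 : γ (dist x y) = y)
    (hγ : LipschitzOnWith 1 γ (Icc 0 (dist x y))) : JoinedByGeodesic x y := by
  refine ⟨γ, h0, h1, ?_⟩
  have hle : ∀ s ∈ Icc (0 : ℝ) (dist x y), ∀ t ∈ Icc (0 : ℝ) (dist x y),
      dist (γ s) (γ t) ≤ |s - t| := fun s hs t ht => by
    simpa [Real.dist_eq] using hγ.dist_le_mul s hs t ht
  suffices h : ∀ s ∈ Icc (0 : ℝ) (dist x y), ∀ t ∈ Icc (0 : ℝ) (dist x y), s ≤ t →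
      dist (γ s) (γ t) = |s - t| by
    intro s hs t ht
    rcases le_total s t with hst | hts
    · exact h s hs t ht hst
    · rw [dist_comm, abs_sub_comm]
      exact h t ht s hs hts
  intro s hs t ht hst
  refine (hle s hs t ht).antisymm ?_
  have hx := hle 0 ⟨le_rfl, dist_nonneg⟩ s hs
  have hy := hle t ht (dist x y) ⟨dist_nonneg, le_rfl⟩
  rw [h0, abs_of_nonpos (by linarith [hs.1])] at hx
  rw [h1, abs_of_nonpos (by linarith [ht.2])] at hy
  rw [abs_of_nonpos (by linarith)]
  linarith [dist_triangle4 x (γ s) (γ t) y]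

lemma trans {x y z : X} (hxy : JoinedByGeodesic x y) (hyz : JoinedByGeodesic y z)
    (h : dist x y + dist y z = dist x z) : JoinedByGeodesic x z := by
  obtain ⟨γ, γ0, γ1, hγ⟩ := hxy
  obtain ⟨δ, δ0, δ1, hδ⟩ := hyz
  have hγ' : LipschitzOnWith 1 γ (Icc 0 (dist x y)) :=
    LipschitzOnWith.of_dist_le_mul fun s hs t ht => by
      simp [hγ s hs t ht, Real.dist_eq]
  have hδ' : LipschitzOnWith 1 (fun t => δ (t - dist x y)) (Icc (dist x y) (dist x z)) :=
    LipschitzOnWith.of_dist_le_mul fun s hs t ht => by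
      rw [hδ _ ⟨by linarith [hs.1], by linarith [hs.2]⟩ _ ⟨by linarith [ht.1], by linarith [ht.2]⟩]
      simp [Real.dist_eq]
  refine of_lipschitzOnWith ?_ ?_ (lipschitzOnWith_ite_le hγ' hδ' (by simp [γ1, δ0]))
  · simp [γ0]
  · rcases (dist_nonneg (x := y) (y := z)).eq_or_lt with hd | hd
    · obtain rfl : y = z := dist_eq_zero.1 hd.symm
      simp [γ1]
    · rw [if_neg (by linarith), ← h, add_sub_cancel_left, δ1]

lemma map {Y : Type*} [MetricSpace Y] {x y : X} (h : JoinedByGeodesic x y) {f : X → Y}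
    (hf : Isometry f) : JoinedByGeodesic (f x) (f y) := by
  obtain ⟨γ, γ0, γ1, hγ⟩ := h
  refine ⟨f ∘ γ, by simp [γ0], by simp [hf.dist_eq, γ1], ?_⟩
  simpa [hf.dist_eq] using hγ

end JoinedByGeodesic

lemma isGeodesicSpace_of_normedSpace {V : Type*} [NormedAddCommGroup V] [NormedSpace ℝ V] :
    IsGeodesicSpace V := by
  intro x y
  rcases eq_or_ne x y with rfl | hne
  · exact ⟨fun _ => x, rfl, rfl, fun s hs t ht => by
      obtain ⟨rfl, rfl⟩ : s = 0 ∧ t = 0 := by simpa using And.intro hs ht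
      simp⟩
  have hd : dist x y ≠ 0 := dist_ne_zero.2 hne
  refine ⟨fun t => AffineMap.lineMap x y (t / dist x y), by simp, by simp [hd], fun s _ t _ => ?_⟩
  rw [dist_lineMap_lineMap, Real.dist_eq, ← _root_.sub_div, abs_div, abs_of_nonneg dist_nonneg,
    div_mul_cancel₀ _ hd]

variable [MeasurableSpace X] [BorelSpace X]

lemma setLIntegral_hausdorffMeasure_image_le {g : ℝ → X} {L : ℝ≥0} (hg : LipschitzWith L g)
    {ρ : X → ℝ≥0∞} (hρ : Measurable ρ) (S : Set ℝ) :
    ∫⁻ x in g '' S, ρ x ∂μH[1] ≤ L * ∫⁻ t in S, ρ (g t) := by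
  have hgm : Measurable g := hg.continuous.measurable
  rw [← lintegral_map (μ := volume.restrict S) hρ hgm, ← smul_eq_mul, ← lintegral_smul_measure]
  refine lintegral_mono' (Measure.le_iff.2 fun A hA => ?_) le_rfl
  rw [Measure.restrict_apply hA, Measure.smul_apply, Measure.map_apply hgm hA,
    Measure.restrict_apply (hgm hA), ← image_preimage_inter]
  simpa [hausdorffMeasure_real] using
    hg.hausdorffMeasure_image_le (d := 1) zero_le_one (g ⁻¹' A ∩ S)

lemma ofReal_abs_sub_le_mul_volume {g : ℝ → ℝ} {L : ℝ≥0} {a b : ℝ} {T : Set ℝ}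
    (hg : LipschitzOnWith L g T) (hT : Ioo (min (g a) (g b)) (max (g a) (g b)) ⊆ g '' T) :
    ENNReal.ofReal |g b - g a| ≤ L * volume T := by
  calc ENNReal.ofReal |g b - g a| = volume (Ioo (min (g a) (g b)) (max (g a) (g b))) := by
        rw [Real.volume_Ioo, max_sub_min_eq_abs]
    _ ≤ volume (g '' T) := measure_mono hT
    _ ≤ L * volume T := by
        simpa [hausdorffMeasure_real] using hg.hausdorffMeasure_image_le (d := 1) zero_le_one

end LipschitzCurves

section Cutoff

variable {X : Type*} [PseudoMetricSpace X] {h : X → ℝ} {r : ℝ}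

lemma lipschitzWith_min_one_div (hh : LipschitzWith 1 h) (hr : 0 < r) :
    LipschitzWith (Real.toNNReal r⁻¹) fun x => min 1 (h x / r) := by
  refine LipschitzWith.const_min (LipschitzWith.of_dist_le_mul fun x y => ?_) 1
  rw [Real.coe_toNNReal _ (inv_nonneg.2 hr.le), Real.dist_eq, ← _root_.sub_div, abs_div,
    abs_of_pos hr, ← Real.dist_eq, inv_mul_eq_div]
  gcongr
  simpa using hh.dist_le_mul x y

/-- A truncated function varies only where it is strictly between its two truncation values. -/
lemma isUpperGradientOn_min_one_div (hh : LipschitzWith 1 h) (hn : ∀ x, 0 ≤ h x) (hr : 0 < r) :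
    IsUpperGradientOn (fun x => min 1 (h x / r))
      ((h ⁻¹' Ioo 0 r).indicator fun _ => ENNReal.ofReal r⁻¹) univ := by
  intro L hL γ hγ _
  set u : X → ℝ := fun x => min 1 (h x / r)
  have hhγ : ContinuousOn (h ∘ γ) (Icc 0 L) := hh.continuous.comp_continuousOn hγ.continuousOn
  have hg : LipschitzOnWith (Real.toNNReal r⁻¹) (u ∘ γ) (Icc 0 L) := by
    simpa using (lipschitzWith_min_one_div hh hr).comp_lipschitzOnWith hγ
  set T := Icc 0 L ∩ h ∘ γ ⁻¹' Ioo 0 r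
  have hT : MeasurableSet T := by
    obtain ⟨O, hO, hOT⟩ := continuousOn_iff'.1 hhγ _ isOpen_Ioo
    rw [show T = O ∩ Icc 0 L by rw [← hOT, inter_comm]]
    exact hO.measurableSet.inter measurableSet_Icc
  have hu01 : ∀ x, u x ∈ Icc 0 1 := fun x =>
    ⟨le_min zero_le_one (div_nonneg (hn x) hr.le), min_le_left _ _⟩
  have hsub : Ioo (min (u (γ 0)) (u (γ L))) (max (u (γ 0)) (u (γ L))) ⊆ u ∘ γ '' T := by
    intro y hy
    obtain ⟨t, ht, rfl⟩ : y ∈ u ∘ γ '' Icc 0 L :=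
      (isPreconnected_Icc.image _ hg.continuousOn).ordConnected.uIcc_subset
        ⟨0, ⟨le_rfl, hL⟩, rfl⟩ ⟨L, ⟨hL, le_rfl⟩, rfl⟩ (Ioo_subset_Icc_self hy)
    refine ⟨t, ⟨ht, ?_⟩, rfl⟩
    have h0 : 0 < u (γ t) := (le_min (hu01 _).1 (hu01 _).1).trans_lt hy.1
    have h1 : u (γ t) < 1 := hy.2.trans_le (max_le (hu01 _).2 (hu01 _).2)
    exact ⟨(div_pos_iff_of_pos_right hr).1 (lt_min_iff.1 h0).2,
      (div_lt_one hr).1 ((min_lt_iff.1 h1).resolve_left (lt_irrefl 1))⟩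
  calc ENNReal.ofReal |u (γ L) - u (γ 0)|
      ≤ ENNReal.ofReal r⁻¹ * volume T :=
        ofReal_abs_sub_le_mul_volume (g := u ∘ γ) (hg.mono inter_subset_left) hsub
    _ = ∫⁻ t in T, (h ⁻¹' Ioo 0 r).indicator (fun _ => ENNReal.ofReal r⁻¹) (γ t) := by
        rw [← setLIntegral_const]
        exact setLIntegral_congr_fun hT fun t ht => by
          rw [indicator_of_mem (show γ t ∈ h ⁻¹' Ioo 0 r from ht.2)]
    _ ≤ _ := lintegral_mono_set inter_subset_left

end Cutoff

section Frostman

/-- A Frostman condition of exponent `t` for `ν` at the scale `δ`: balls of radius `δ * τ` have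
measure at most `C * τ ^ t`. Normalizing radii by `δ` makes the constant invariant under
similarities. -/
def IsFrostman {X : Type*} [PseudoMetricSpace X] [MeasurableSpace X] (ν : Measure X) (δ t : ℝ)
    (C : ℝ≥0) : Prop :=
  ∀ (z : X) (τ : ℝ), 0 < τ → ν (closedBall z (δ * τ)) ≤ C * ENNReal.ofReal (τ ^ t)

/-- The set `K` carries, within distance `R` of `k`, a probability measure which is Frostman of
exponent `t` at the scale `R`. -/
def CarriesFrostman {X : Type*} [PseudoMetricSpace X] [MeasurableSpace X] (K : Set X) (k : X)
    (R t : ℝ) (C : ℝ≥0) : Prop :=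
  ∃ ν : Measure X, IsProbabilityMeasure ν ∧ (∀ᵐ x ∂ν, x ∈ K ∩ closedBall k R) ∧
    IsFrostman ν R t C

variable {X Y : Type*} [PseudoMetricSpace X] [MeasurableSpace X] [PseudoMetricSpace Y]
  [MeasurableSpace Y] {ν : Measure X} {δ δ' t : ℝ} {C : ℝ≥0}

namespace IsFrostman

lemma of_le_mul (h : IsFrostman ν δ t C) {A : ℝ≥0} (hA : 0 < A) (hδ : δ' ≤ A * δ) :
    IsFrostman ν δ' t (C * A ^ t) := fun z τ hτ =>
  calc ν (closedBall z (δ' * τ)) ≤ ν (closedBall z (δ * (A * τ))) :=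
        measure_mono (closedBall_subset_closedBall (by nlinarith))
    _ ≤ C * ENNReal.ofReal ((A * τ) ^ t) := h z _ (by positivity)
    _ = (C * A ^ t : ℝ≥0) * ENNReal.ofReal (τ ^ t) := by
        rw [Real.mul_rpow A.coe_nonneg hτ.le, ENNReal.ofReal_mul (by positivity), ← NNReal.coe_rpow,
          ENNReal.ofReal_coe_nnreal, ENNReal.coe_mul, mul_assoc]

lemma map (h : IsFrostman ν δ t C) {f : X → Y} {c : ℝ} (hc : 0 < c)
    (hf : ∀ x y, dist (f x) (f y) = c * dist x y) (hfs : Function.Surjective f)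
    (hfm : AEMeasurable f ν) [OpensMeasurableSpace Y] :
    IsFrostman (ν.map f) (c * δ) t C := by
  intro z τ hτ
  obtain ⟨x, rfl⟩ := hfs z
  rw [Measure.map_apply_of_aemeasurable hfm measurableSet_closedBall]
  refine le_trans (measure_mono fun y hy => ?_) (h x τ hτ)
  rw [mem_preimage, mem_closedBall, hf, mul_assoc] at hy
  exact le_of_mul_le_mul_left hy hc

end IsFrostman

namespace CarriesFrostman

variable {K : Set X} {K' : Set Y} {k : X} {R R' : ℝ}

lemma of_le_mul (h : CarriesFrostman K k R t C) (hR : R ≤ R') {A : ℝ≥0} (hA : 0 < A)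
    (hR' : R' ≤ A * R) : CarriesFrostman K k R' t (C * A ^ t) := by
  obtain ⟨ν, hν, hνK, hνF⟩ := h
  refine ⟨ν, hν, ?_, hνF.of_le_mul hA hR'⟩
  filter_upwards [hνK] with x hx using ⟨hx.1, closedBall_subset_closedBall hR hx.2⟩

lemma map (h : CarriesFrostman K k R t C) {f : X → Y} {c : ℝ} (hc : 0 < c)
    (hf : ∀ x y, dist (f x) (f y) = c * dist x y) (hfs : Function.Surjective f)
    (hfK : MapsTo f K K') (hK' : MeasurableSet K') [OpensMeasurableSpace X] [BorelSpace Y] :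
    CarriesFrostman K' (f k) (c * R) t C := by
  obtain ⟨ν, hν, hνK, hνF⟩ := h
  have hfm : Measurable f :=
    (LipschitzWith.of_dist_le_mul (K := ⟨c, hc.le⟩) fun x y => (hf x y).le).continuous.measurable
  refine ⟨ν.map f, Measure.isProbabilityMeasure_map hfm.aemeasurable, ?_,
    hνF.map hc hf hfs hfm.aemeasurable⟩
  refine (ae_map_iff hfm.aemeasurable (hK'.inter measurableSet_closedBall)).2 ?_
  filter_upwards [hνK] with x hx
  exact ⟨hfK hx.1, by rw [mem_closedBall, hf]; exact mul_le_mul_of_nonneg_left hx.2 hc.le⟩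

end CarriesFrostman

lemma lintegral_setLIntegral_closedBall [OpensMeasurableSpace X] [SecondCountableTopology X]
    {μ : Measure X} [SFinite μ] [SFinite ν] {B : Set X} (s : ℝ) {g : X → ℝ≥0∞}
    (hg : Measurable g) :
    ∫⁻ x, ∫⁻ z in B ∩ closedBall x s, g z ∂μ ∂ν = ∫⁻ z in B, ν (closedBall z s) * g z ∂μ := by
  have hset : MeasurableSet {q : X × X | dist q.2 q.1 ≤ s} :=
    measurableSet_le (by fun_prop) measurable_const
  calc ∫⁻ x, ∫⁻ z in B ∩ closedBall x s, g z ∂μ ∂ν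
      = ∫⁻ x, ∫⁻ z in B, {q : X × X | dist q.2 q.1 ≤ s}.indicator (fun q => g q.2) (x, z)
          ∂μ ∂ν := by
        refine lintegral_congr fun x => ?_
        rw [inter_comm, ← Measure.restrict_restrict measurableSet_closedBall,
          ← lintegral_indicator measurableSet_closedBall]
        rfl
    _ = ∫⁻ z in B, ∫⁻ x, (closedBall z s).indicator (fun _ => g z) x ∂ν ∂μ := by
        rw [lintegral_lintegral_swap]
        swap
        · exact ((hg.comp measurable_snd).indicator hset).aemeasurable
        refine lintegral_congr fun z => lintegral_congr fun x => ?_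
        by_cases h : dist z x ≤ s
        · rw [indicator_of_mem (show (x, z) ∈ _ from h),
            indicator_of_mem (mem_closedBall'.2 h)]
        · rw [indicator_of_notMem (show (x, z) ∉ _ from h),
            indicator_of_notMem (mt mem_closedBall'.1 h)]
    _ = ∫⁻ z in B, ν (closedBall z s) * g z ∂μ := by
        simp [lintegral_indicator_const measurableSet_closedBall, mul_comm]

end Frostman

section Segments

variable {V : Type*} [NormedAddCommGroup V] [NormedSpace ℝ V]

/-- The integral of `w` along the segment from `x` to `y`, parametrized by `[0, 1]`. -/
noncomputable def segmentIntegral (w : V → ℝ≥0∞) (x y : V) : ℝ≥0∞ :=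
  ∫⁻ τ in Icc (0 : ℝ) 1, w (AffineMap.lineMap x y τ)

variable [MeasurableSpace V] [BorelSpace V] [FiniteDimensional ℝ V]

lemma measurable_comp_lineMap {w : V → ℝ≥0∞} (hw : Measurable w) :
    Measurable fun q : (V × V) × ℝ => w (AffineMap.lineMap q.1.1 q.1.2 q.2) := by
  refine hw.comp (Continuous.measurable ?_)
  simp only [AffineMap.lineMap_apply_module]
  fun_prop

lemma measurable_segmentIntegral {w : V → ℝ≥0∞} (hw : Measurable w) :
    Measurable fun q : V × V => segmentIntegral w q.1 q.2 :=
  (measurable_comp_lineMap hw).lintegral_prod_right'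

variable {μ : Measure V} [μ.IsAddHaarMeasure]

lemma isFrostman_cond_ball (v : V) {r : ℝ} (hr : 0 < r) :
    IsFrostman (ProbabilityTheory.cond μ (ball v r)) r (Module.finrank ℝ V) 1 := by
  intro z τ hτ
  have h0 : μ (ball v r) ≠ 0 := (measure_ball_pos μ v hr).ne'
  calc ProbabilityTheory.cond μ (ball v r) (closedBall z (r * τ))
      ≤ (μ (ball v r))⁻¹ * μ (closedBall z (r * τ)) := by
        rw [ProbabilityTheory.cond_apply measurableSet_ball]
        gcongr
        exact inter_subset_right
    _ = ENNReal.ofReal (τ ^ Module.finrank ℝ V) * ((μ (ball v r))⁻¹ * μ (ball v r)) := by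
        rw [Measure.addHaar_closedBall μ z (by positivity), Measure.addHaar_ball_of_pos μ v hr,
          mul_pow, ENNReal.ofReal_mul (by positivity)]
        ring
    _ = (1 : ℝ≥0) * ENNReal.ofReal (τ ^ (Module.finrank ℝ V : ℝ)) := by
        rw [ENNReal.inv_mul_cancel h0 measure_ball_lt_top.ne, Real.rpow_natCast]
        simp

lemma lintegral_comp_lineMap (k : V) {τ : ℝ} (hτ : 0 < τ) {h : V → ℝ≥0∞} (hh : Measurable h) :
    ∫⁻ x, h (AffineMap.lineMap k x τ) ∂μ =
      ENNReal.ofReal (τ ^ Module.finrank ℝ V)⁻¹ * ∫⁻ z, h z ∂μ := by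
  calc ∫⁻ x, h (AffineMap.lineMap k x τ) ∂μ
      = ∫⁻ y, h ((1 - τ) • k + y) ∂(μ.map (τ • ·)) := by
        rw [lintegral_map (by fun_prop) (by fun_prop)]
        simp only [AffineMap.lineMap_apply_module]
    _ = ENNReal.ofReal (τ ^ Module.finrank ℝ V)⁻¹ * ∫⁻ z, h z ∂μ := by
        rw [Measure.map_addHaar_smul μ hτ.ne', lintegral_smul_measure, lintegral_add_left_eq_self,
          abs_of_pos (by positivity), smul_eq_mul]

variable {B : Set V} {δ : ℝ}

lemma setLIntegral_comp_lineMap_le (hB : Convex ℝ B) (hBm : MeasurableSet B)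
    (hδ : ∀ x ∈ B, ∀ y ∈ B, dist x y ≤ δ) {k : V} (hk : k ∈ B) {τ : ℝ} (hτ : τ ∈ Ioc (0 : ℝ) 1)
    {g : V → ℝ≥0∞} (hg : Measurable g) :
    ∫⁻ x in B, g (AffineMap.lineMap k x τ) ∂μ ≤
      ENNReal.ofReal (τ ^ Module.finrank ℝ V)⁻¹ * ∫⁻ z in B ∩ closedBall k (δ * τ), g z ∂μ := by
  have hm : MeasurableSet (B ∩ closedBall k (δ * τ)) := hBm.inter measurableSet_closedBall
  rw [← lintegral_indicator hm, ← lintegral_comp_lineMap k hτ.1 (hg.indicator hm)]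
  refine (setLIntegral_mono' hBm fun x hx => ?_).trans (setLIntegral_le_lintegral B _)
  have hmem : AffineMap.lineMap k x τ ∈ B ∩ closedBall k (δ * τ) := by
    refine ⟨hB.lineMap_mem hk hx ⟨hτ.1.le, hτ.2⟩, ?_⟩
    rw [mem_closedBall, dist_lineMap_left, Real.norm_of_nonneg hτ.1.le, mul_comm]
    exact mul_le_mul_of_nonneg_right (hδ k hk x hx) hτ.1.le
  rw [indicator_of_mem hmem]

variable {ν : Measure V} [IsProbabilityMeasure ν] {p t : ℝ} {C : ℝ≥0}

lemma IsFrostman.lintegral_setLIntegral_comp_lineMap_le (hF : IsFrostman ν δ t C)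
    (hB : Convex ℝ B) (hBm : MeasurableSet B) (hδ : ∀ x ∈ B, ∀ y ∈ B, dist x y ≤ δ)
    (hν : ∀ᵐ k ∂ν, k ∈ B) {τ : ℝ} (hτ : τ ∈ Ioc (0 : ℝ) 1) {g : V → ℝ≥0∞} (hg : Measurable g) :
    ∫⁻ k, ∫⁻ x in B, g (AffineMap.lineMap k x τ) ∂μ ∂ν ≤
      C * ENNReal.ofReal (τ ^ (t - Module.finrank ℝ V)) * ∫⁻ z in B, g z ∂μ := by
  have hτt : ENNReal.ofReal (τ ^ (t - Module.finrank ℝ V)) =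
      ENNReal.ofReal (τ ^ Module.finrank ℝ V)⁻¹ * ENNReal.ofReal (τ ^ t) := by
    rw [← ENNReal.ofReal_mul (by have := hτ.1; positivity), Real.rpow_sub hτ.1, Real.rpow_natCast,
      inv_mul_eq_div]
  calc ∫⁻ k, ∫⁻ x in B, g (AffineMap.lineMap k x τ) ∂μ ∂ν
      ≤ ∫⁻ k, ENNReal.ofReal (τ ^ Module.finrank ℝ V)⁻¹ *
          ∫⁻ z in B ∩ closedBall k (δ * τ), g z ∂μ ∂ν := by
        refine lintegral_mono_ae ?_
        filter_upwards [hν] with k hk using setLIntegral_comp_lineMap_le hB hBm hδ hk hτ hg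
    _ = ENNReal.ofReal (τ ^ Module.finrank ℝ V)⁻¹ *
          ∫⁻ z in B, ν (closedBall z (δ * τ)) * g z ∂μ := by
        rw [lintegral_const_mul' _ _ ENNReal.ofReal_ne_top,
          lintegral_setLIntegral_closedBall _ hg]
    _ ≤ ENNReal.ofReal (τ ^ Module.finrank ℝ V)⁻¹ *
          ∫⁻ z in B, C * ENNReal.ofReal (τ ^ t) * g z ∂μ := by
        gcongr with z
        exact hF z τ hτ.1
    _ = C * ENNReal.ofReal (τ ^ (t - Module.finrank ℝ V)) * ∫⁻ z in B, g z ∂μ := by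
        rw [lintegral_const_mul _ hg, hτt]
        ring

/-- The constant in the bound on averages of segment integrals against a Frostman measure of
exponent `t` in dimension `d`. -/
noncomputable def segmentConst (d : ℕ) (p t : ℝ) (C : ℝ≥0) : ℝ≥0∞ :=
  C ^ (1 / p) * ∫⁻ τ in Ioc (0 : ℝ) 1, ENNReal.ofReal (τ ^ ((t - d) / p))

lemma segmentConst_ne_top {d : ℕ} (hp : 0 < p) (ht : d - p < t) : segmentConst d p t C ≠ ⊤ := by
  refine ENNReal.mul_ne_top
    (ENNReal.rpow_ne_top_of_nonneg (by positivity) ENNReal.coe_ne_top) ?_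
  have hi : IntervalIntegrable (fun τ : ℝ => τ ^ ((t - d) / p)) volume 0 1 :=
    intervalIntegral.intervalIntegrable_rpow' (by rw [lt_div_iff₀ hp]; linarith)
  rw [intervalIntegrable_iff_integrableOn_Ioc_of_le zero_le_one] at hi
  exact hi.lintegral_lt_top.ne

/-- Applying Hölder's inequality for each fixed `τ`, before integrating in `τ`, is what makes a
Frostman exponent `t > d - p` suffice. -/
lemma IsFrostman.lintegral_setLIntegral_segmentIntegral_le (hF : IsFrostman ν δ t C)
    (hB : Convex ℝ B) (hBm : MeasurableSet B) (hδ : ∀ x ∈ B, ∀ y ∈ B, dist x y ≤ δ)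
    (hν : ∀ᵐ k ∂ν, k ∈ B) (hp : 1 ≤ p) {w : V → ℝ≥0∞} (hw : Measurable w) :
    ∫⁻ k, ∫⁻ x in B, segmentIntegral w k x ∂μ ∂ν ≤
      segmentConst (Module.finrank ℝ V) p t C *
        ((∫⁻ z in B, w z ^ p ∂μ) ^ (1 / p) * μ B ^ (1 - 1 / p)) := by
  set d := Module.finrank ℝ V
  set W := (∫⁻ z in B, w z ^ p ∂μ) ^ (1 / p) * μ B ^ (1 - 1 / p)
  have hm := measurable_comp_lineMap hw
  have hmτ : ∀ τ : ℝ, Measurable fun q : V × V => w (AffineMap.lineMap q.1 q.2 τ) :=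
    fun τ => hm.comp (measurable_id.prodMk measurable_const)
  have hmass : (ν.prod (μ.restrict B)) univ = μ B := by
    rw [← univ_prod_univ, Measure.prod_prod]; simp
  have hτ : ∀ τ ∈ Ioc (0 : ℝ) 1,
      ∫⁻ q, w (AffineMap.lineMap q.1 q.2 τ) ∂(ν.prod (μ.restrict B)) ≤
        C ^ (1 / p) * ENNReal.ofReal (τ ^ ((t - d) / p)) * W := by
    intro τ hτ
    have h := hF.lintegral_setLIntegral_comp_lineMap_le (μ := μ) hB hBm hδ hν hτ (hw.pow_const p)
    calc _ ≤ _ := lintegral_le_rpow_lintegral_rpow_mul hp (hmτ τ).aemeasurable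
      _ ≤ (C * ENNReal.ofReal (τ ^ (t - d)) * ∫⁻ z in B, w z ^ p ∂μ) ^ (1 / p) *
          μ B ^ (1 - 1 / p) := by
        rw [hmass, lintegral_prod _ ((hmτ τ).pow_const p).aemeasurable]
        gcongr
      _ = C ^ (1 / p) * ENNReal.ofReal (τ ^ ((t - d) / p)) * W := by
        rw [ENNReal.mul_rpow_of_nonneg _ _ (by positivity),
          ENNReal.mul_rpow_of_nonneg _ _ (by positivity),
          ENNReal.ofReal_rpow_of_nonneg (Real.rpow_nonneg hτ.1.le _) (by positivity),
          ← Real.rpow_mul hτ.1.le, mul_one_div, mul_assoc]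
  calc ∫⁻ k, ∫⁻ x in B, segmentIntegral w k x ∂μ ∂ν
      = ∫⁻ q, ∫⁻ τ in Ioc (0 : ℝ) 1, w (AffineMap.lineMap q.1 q.2 τ)
          ∂volume ∂(ν.prod (μ.restrict B)) := by
        rw [lintegral_lintegral (measurable_segmentIntegral hw).aemeasurable]
        simp only [segmentIntegral, setLIntegral_congr Ioc_ae_eq_Icc]
    _ = ∫⁻ τ in Ioc (0 : ℝ) 1,
          ∫⁻ q, w (AffineMap.lineMap q.1 q.2 τ) ∂(ν.prod (μ.restrict B)) :=
        lintegral_lintegral_swap hm.aemeasurable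
    _ ≤ ∫⁻ τ in Ioc (0 : ℝ) 1, C ^ (1 / p) * ENNReal.ofReal (τ ^ ((t - d) / p)) * W :=
        setLIntegral_mono' measurableSet_Ioc hτ
    _ = segmentConst d p t C * W := by
        rw [lintegral_mul_const _ (by fun_prop), lintegral_const_mul _ (by fun_prop), segmentConst]

end Segments

section CantorDust

/-- The point of the Cantor dust with ratio `l` whose construction digits are `s`. The coordinates
are normalized to fill `[0, 1]`. -/
noncomputable def cantorMap {ι : Type*} (l : ℝ) (s : ℕ → ι → Bool) : ι → ℝ :=
  fun i => (1 - l) * Cardinal.cantorFunction l fun n => s n i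

/-- The Cantor dust with ratio `l`: the self-similar set which is the union of the `2 ^ card ι`
copies of itself of ratio `l` placed at the corners of the unit cube. -/
def cantorDust (ι : Type*) (l : ℝ) : Set (ι → ℝ) := range (cantorMap l)

/-- The corner of the unit cube with the given binary coordinates. -/
def corner {ι : Type*} (e : ι → Bool) : ι → ℝ := fun i => cond (e i) 1 0

variable {ι : Type*} {l : ℝ}

section LtOne

variable (h0 : 0 < l) (h1 : l < 1)
include h0 h1

lemma cantorMap_eq_corner_add (s : ℕ → ι → Bool) :
    cantorMap l s = (1 - l) • corner (s 0) + l • cantorMap l fun n => s (n + 1) := by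
  ext i
  calc (1 - l) * Cardinal.cantorFunction l (fun n => s n i)
      = (1 - l) * (cond (s 0 i) 1 0 + l * Cardinal.cantorFunction l fun n => s (n + 1) i) := by
        rw [Cardinal.cantorFunction_succ _ h0.le h1]
    _ = (1 - l) * cond (s 0 i) 1 0 +
          l * ((1 - l) * Cardinal.cantorFunction l fun n => s (n + 1) i) := by ring

lemma cantorMap_mem_Icc (s : ℕ → ι → Bool) : cantorMap l s ∈ Icc (0 : ι → ℝ) 1 := by
  have hn : ∀ i n, 0 ≤ Cardinal.cantorFunctionAux l (fun n => s n i) n :=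
    fun i n => Cardinal.cantorFunctionAux_nonneg h0.le
  refine ⟨fun i => mul_nonneg (by linarith) (tsum_nonneg (hn i)), fun i => ?_⟩
  have hle : ∀ n, Cardinal.cantorFunctionAux l (fun n => s n i) n ≤ l ^ n := fun n => by
    cases h : s n i <;> simp [Cardinal.cantorFunctionAux, h, h0.le]
  calc (1 - l) * ∑' n, Cardinal.cantorFunctionAux l (fun n => s n i) n
      ≤ (1 - l) * ∑' n, l ^ n :=
        mul_le_mul_of_nonneg_left ((Cardinal.summable_cantor_function _ h0.le h1).tsum_le_tsum hle
          (summable_geometric_of_lt_one h0.le h1)) (by linarith)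
    _ = 1 := by rw [tsum_geometric_of_lt_one h0.le h1, mul_inv_cancel₀ (by linarith)]

lemma continuous_cantorMap : Continuous (cantorMap l : (ℕ → ι → Bool) → ι → ℝ) := by
  refine continuous_pi fun i => continuous_const.mul ?_
  refine continuous_tsum (fun n => ?_) (summable_geometric_of_lt_one h0.le h1) fun n s => ?_
  · have hc : Continuous fun b : Bool => cond b (l ^ n) 0 := continuous_of_discreteTopology
    exact hc.comp ((continuous_apply i).comp (continuous_apply n))
  · cases h : s n i <;> simp [Cardinal.cantorFunctionAux, h, abs_of_pos h0, h0.le]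

lemma isCompact_cantorDust : IsCompact (cantorDust ι l) :=
  isCompact_range (continuous_cantorMap h0 h1)

lemma mem_cantorDust_iff {x : ι → ℝ} :
    x ∈ cantorDust ι l ↔ ∃ e, ∃ y ∈ cantorDust ι l, x = (1 - l) • corner e + l • y := by
  constructor
  · rintro ⟨s, rfl⟩
    exact ⟨_, _, mem_range_self _, cantorMap_eq_corner_add h0 h1 s⟩
  · rintro ⟨e, _, ⟨s, rfl⟩, rfl⟩
    exact ⟨fun n => Nat.casesOn n e s, cantorMap_eq_corner_add h0 h1 _⟩

lemma smul_mem_cantorDust {x : ι → ℝ} (hx : x ∈ cantorDust ι l) : l • x ∈ cantorDust ι l :=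
  (mem_cantorDust_iff h0 h1).2 ⟨fun _ => false, x, hx, by ext; simp [corner]⟩

lemma exists_similarity_cantorDust (n : ℕ) {x : ι → ℝ} (hx : x ∈ cantorDust ι l) :
    ∃ b, ∃ y ∈ cantorDust ι l, x = b + l ^ n • y ∧
      MapsTo (fun z => b + l ^ n • z) (cantorDust ι l) (cantorDust ι l) := by
  induction n generalizing x with
  | zero => exact ⟨0, x, hx, by simp, fun z hz => by simpa using hz⟩
  | succ n ih =>
    obtain ⟨e, y, hy, rfl⟩ := (mem_cantorDust_iff h0 h1).1 hx
    obtain ⟨b, z, hz, rfl, hb⟩ := ih hy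
    have key : ∀ v : ι → ℝ, (1 - l) • corner e + l • b + l ^ (n + 1) • v =
        (1 - l) • corner e + l • (b + l ^ n • v) := fun v => by
      rw [smul_add, smul_smul, ← pow_succ', add_assoc]
    refine ⟨(1 - l) • corner e + l • b, z, hz, (key z).symm, fun v hv => ?_⟩
    exact (mem_cantorDust_iff h0 h1).2 ⟨e, _, hb hv, key v⟩

variable [Fintype ι]

lemma dist_le_one_of_mem_cantorDust {x y : ι → ℝ} (hx : x ∈ cantorDust ι l)
    (hy : y ∈ cantorDust ι l) : dist x y ≤ 1 := by
  obtain ⟨s, rfl⟩ := hx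
  obtain ⟨s', rfl⟩ := hy
  have hs := cantorMap_mem_Icc h0 h1 s
  have hs' := cantorMap_mem_Icc h0 h1 s'
  simpa using (dist_pi_le_iff zero_le_one).2 fun i =>
    Real.dist_le_of_mem_Icc_01 ⟨hs.1 i, hs.2 i⟩ ⟨hs'.1 i, hs'.2 i⟩

lemma dist_cantorMap_of_eq_zero {s s' : ℕ → ι → Bool} (h : s 0 = s' 0) :
    dist (cantorMap l s) (cantorMap l s') =
      l * dist (cantorMap l fun n => s (n + 1)) (cantorMap l fun n => s' (n + 1)) := by
  rw [cantorMap_eq_corner_add h0 h1 s, cantorMap_eq_corner_add h0 h1 s', h, dist_add_left,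
    dist_smul₀, Real.norm_of_nonneg h0.le]

lemma one_sub_two_mul_le_dist_cantorMap {s s' : ℕ → ι → Bool} (h : s 0 ≠ s' 0) :
    1 - 2 * l ≤ dist (cantorMap l s) (cantorMap l s') := by
  obtain ⟨i, hi⟩ := Function.ne_iff.1 h
  wlog hs : s 0 i = true generalizing s s'
  · rw [dist_comm]
    exact this h.symm hi.symm (by cases h' : s' 0 i <;> simp_all)
  have hs' : s' 0 i = false := by cases h' : s' 0 i <;> simp_all
  have hl := (cantorMap_mem_Icc h0 h1 fun n => s (n + 1)).1 i
  have hr := (cantorMap_mem_Icc h0 h1 fun n => s' (n + 1)).2 i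
  calc 1 - 2 * l ≤ cantorMap l s i - cantorMap l s' i := by
        rw [cantorMap_eq_corner_add h0 h1 s, cantorMap_eq_corner_add h0 h1 s']
        simp only [Pi.zero_apply, Pi.one_apply] at hl hr
        simp only [Pi.add_apply, Pi.smul_apply, smul_eq_mul, corner, hs, hs', cond_true, cond_false]
        nlinarith
    _ ≤ dist (cantorMap l s i) (cantorMap l s' i) := le_abs_self _
    _ ≤ dist (cantorMap l s) (cantorMap l s') := dist_le_pi_dist _ _ i

lemma exists_finset_cover_cantorDust (n : ℕ) :
    ∃ T : Finset (ι → ℝ), T.card ≤ (2 ^ Fintype.card ι) ^ n ∧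
      cantorDust ι l ⊆ ⋃ p ∈ T, closedBall p (l ^ n) := by
  classical
  induction n with
  | zero =>
    obtain ⟨x, hx⟩ : (cantorDust ι l).Nonempty := range_nonempty _
    exact ⟨{x}, by simp, fun y hy => by simpa using dist_le_one_of_mem_cantorDust h0 h1 hy hx⟩
  | succ n ih =>
    obtain ⟨T, hT, hc⟩ := ih
    let f : (ι → Bool) × (ι → ℝ) → ι → ℝ := fun q => (1 - l) • corner q.1 + l • q.2
    refine ⟨(Finset.univ ×ˢ T).image f, ?_, fun x hx => ?_⟩
    · calc _ ≤ (Finset.univ ×ˢ T).card := Finset.card_image_le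
        _ ≤ (2 ^ Fintype.card ι) ^ (n + 1) := by
          rw [Finset.card_product, pow_succ']
          simpa using hT
    · obtain ⟨e, y, hy, rfl⟩ := (mem_cantorDust_iff h0 h1).1 hx
      obtain ⟨p, hp, hd⟩ := mem_iUnion₂.1 (hc hy)
      refine mem_iUnion₂.2 ⟨f (e, p), Finset.mem_image_of_mem f (by simp [hp]), ?_⟩
      rw [mem_closedBall, dist_add_left, dist_smul₀, Real.norm_of_nonneg h0.le, pow_succ']
      exact mul_le_mul_of_nonneg_left hd h0.le

end LtOne

end CantorDust

section CoveringNumbers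

lemma hausdorffMeasure_eq_zero_of_finset_cover {X : Type*} [MetricSpace X] [MeasurableSpace X]
    [BorelSpace X] {A : Set X} {l s : ℝ} {c : ℕ} (h0 : 0 < l) (h1 : l < 1) (hs : 0 ≤ s)
    (hc : c * l ^ s < 1)
    (hA : ∀ n : ℕ, ∃ T : Finset X, T.card ≤ c ^ n ∧ A ⊆ ⋃ p ∈ T, closedBall p (l ^ n)) :
    μH[s] A = 0 := by
  choose T hT hA using hA
  have hlim : Tendsto (fun n : ℕ => ENNReal.ofReal (2 ^ s * (c * l ^ s) ^ n)) atTop (𝓝 0) := by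
    rw [← ENNReal.ofReal_zero]
    refine ENNReal.tendsto_ofReal ?_
    simpa using (tendsto_pow_atTop_nhds_zero_of_lt_one (by positivity) hc).const_mul (2 ^ s)
  have hr : Tendsto (fun n : ℕ => ENNReal.ofReal (2 * l ^ n)) atTop (𝓝 0) := by
    rw [← ENNReal.ofReal_zero]
    refine ENNReal.tendsto_ofReal ?_
    simpa using (tendsto_pow_atTop_nhds_zero_of_lt_one h0.le h1).const_mul 2
  have hdiam : ∀ n (p : T n), ediam (closedBall (p : X) (l ^ n)) ≤ ENNReal.ofReal (2 * l ^ n) :=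
    fun n p => ediam_le_of_forall_dist_le fun x hx y hy => by
      linarith [dist_triangle_right x y p, mem_closedBall.1 hx, mem_closedBall.1 hy]
  have hsum : ∀ n, ∑ p : T n, ediam (closedBall (p : X) (l ^ n)) ^ s ≤
      ENNReal.ofReal (2 ^ s * (c * l ^ s) ^ n) := fun n =>
    calc ∑ p : T n, ediam (closedBall (p : X) (l ^ n)) ^ s
        ≤ ∑ _p : T n, ENNReal.ofReal (2 * l ^ n) ^ s := by
          gcongr with p
          exact hdiam n p
      _ = (T n).card * ENNReal.ofReal ((2 * l ^ n) ^ s) := by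
          rw [Finset.sum_const, nsmul_eq_mul, Finset.card_univ, Fintype.card_coe,
            ENNReal.ofReal_rpow_of_nonneg (by positivity) hs]
      _ ≤ ENNReal.ofReal (c ^ n) * ENNReal.ofReal ((2 * l ^ n) ^ s) := by
          gcongr
          rw [← ENNReal.ofReal_natCast]
          exact ENNReal.ofReal_le_ofReal (mod_cast hT n)
      _ = ENNReal.ofReal (2 ^ s * (c * l ^ s) ^ n) := by
          rw [← ENNReal.ofReal_mul (by positivity), Real.mul_rpow (by positivity) (by positivity),
            ← Real.rpow_natCast_mul h0.le, mul_comm (n : ℝ) s, Real.rpow_mul_natCast h0.le, mul_pow]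
          ring_nf
  refine le_antisymm ?_ bot_le
  calc μH[s] A ≤ liminf (fun n => ∑ p : T n, ediam (closedBall (p : X) (l ^ n)) ^ s) atTop :=
        Measure.hausdorffMeasure_le_liminf_sum s A _ hr _ (Eventually.of_forall hdiam)
          (Eventually.of_forall fun n => by rw [iUnion_subtype]; exact hA n)
    _ ≤ liminf (fun n => ENNReal.ofReal (2 ^ s * (c * l ^ s) ^ n)) atTop :=
        liminf_le_liminf (Eventually.of_forall hsum)
    _ = 0 := hlim.liminf_eq

end CoveringNumbers

section CantorMeasure

variable {ι : Type*} [Fintype ι] {l t : ℝ} (h0 : 0 < l)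

/-- The natural probability measure on the Cantor dust: the law of the point whose digits are
independent and uniform. -/
noncomputable def cantorMeasure (ι : Type*) [Fintype ι] (l : ℝ) : Measure (ι → ℝ) :=
  (Measure.infinitePi fun _ : ℕ => ProbabilityTheory.uniformOn (univ : Set (ι → Bool))).map
    (cantorMap l)

include h0

lemma isProbabilityMeasure_cantorMeasure (h1 : l < 1) : IsProbabilityMeasure (cantorMeasure ι l) :=
  Measure.isProbabilityMeasure_map (continuous_cantorMap h0 h1).aemeasurable

lemma ae_mem_cantorDust (h1 : l < 1) : ∀ᵐ x ∂cantorMeasure ι l, x ∈ cantorDust ι l :=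
  (ae_map_iff (continuous_cantorMap h0 h1).aemeasurable
    (isCompact_cantorDust h0 h1).isClosed.measurableSet).2 (ae_of_all _ mem_range_self)

variable (h2 : l < 1 / 2)
include h2

lemma eq_of_dist_cantorMap_le {n : ℕ} {s s' : ℕ → ι → Bool}
    (h : dist (cantorMap l s) (cantorMap l s') ≤ l ^ n * (1 - 2 * l)) {j : ℕ} (hj : j < n) :
    s j = s' j := by
  have h1 : l < 1 := by linarith
  induction n generalizing s s' j with
  | zero => exact absurd hj (by simp)
  | succ n ih =>
    have hs : s 0 = s' 0 := by
      by_contra hne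
      exact (one_sub_two_mul_le_dist_cantorMap h0 h1 hne).not_gt
        (h.trans_lt (mul_lt_of_lt_one_left (by linarith) (pow_lt_one₀ h0.le h1 n.succ_ne_zero)))
    rw [dist_cantorMap_of_eq_zero h0 h1 hs, pow_succ', mul_assoc] at h
    cases j with
    | zero => exact hs
    | succ j => exact ih (le_of_mul_le_mul_left h h0) (by omega)

lemma cantorMeasure_le_of_dist_le {n : ℕ} {B : Set (ι → ℝ)} (hBm : MeasurableSet B)
    (hB : ∀ x ∈ B, ∀ y ∈ B, dist x y ≤ l ^ n * (1 - 2 * l)) :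
    cantorMeasure ι l B ≤ ((2 ^ Fintype.card ι)⁻¹ : ℝ≥0∞) ^ n := by
  rw [cantorMeasure, Measure.map_apply (continuous_cantorMap h0 (by linarith)).measurable hBm]
  obtain hemp | ⟨s', hs'⟩ := (cantorMap l ⁻¹' B).eq_empty_or_nonempty
  · simp [hemp]
  classical
  have hsub : cantorMap l ⁻¹' B ⊆ Set.pi (Finset.range n : Set ℕ) fun j => {s' j} :=
    fun s hs j hj => eq_of_dist_cantorMap_le h0 h2 (hB _ hs _ hs') (Finset.mem_range.1 hj)
  refine (measure_mono hsub).trans ?_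
  rw [Measure.infinitePi_pi _ fun i _ => measurableSet_singleton _]
  simp [ProbabilityTheory.uniformOn_univ]

lemma isFrostman_cantorMeasure (hlt : l ^ t = (2 ^ Fintype.card ι)⁻¹) (ht : 0 ≤ t) :
    IsFrostman (cantorMeasure ι l) (l * (1 - 2 * l) / 2) t 1 := by
  have h1 : l < 1 := by linarith
  have := isProbabilityMeasure_cantorMeasure (ι := ι) h0 h1
  intro z τ hτ
  obtain hτ1 | hτ1 := le_total 1 τ
  · refine prob_le_one.trans ?_
    simpa using Real.one_le_rpow hτ1 ht
  obtain ⟨n, hn, hn'⟩ := exists_nat_pow_near_of_lt_one hτ hτ1 h0 h1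
  calc cantorMeasure ι l (closedBall z (l * (1 - 2 * l) / 2 * τ))
      ≤ ((2 ^ Fintype.card ι)⁻¹ : ℝ≥0∞) ^ (n + 1) := by
        refine cantorMeasure_le_of_dist_le h0 h2 measurableSet_closedBall fun x hx y hy => ?_
        have hxy : dist x y ≤ (l * (1 - 2 * l)) * τ := by
          linarith [dist_triangle_right x y z, mem_closedBall.1 hx, mem_closedBall.1 hy]
        calc dist x y ≤ (l * (1 - 2 * l)) * l ^ n :=
              hxy.trans (mul_le_mul_of_nonneg_left hn' (by nlinarith))
          _ = l ^ (n + 1) * (1 - 2 * l) := by ring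
    _ = ENNReal.ofReal ((l ^ (n + 1)) ^ t) := by
        rw [← Real.rpow_natCast_mul h0.le, mul_comm, Real.rpow_mul_natCast h0.le, hlt,
          ENNReal.ofReal_pow (by positivity), ENNReal.ofReal_inv_of_pos (by positivity)]
        simp
    _ ≤ (1 : ℝ≥0) * ENNReal.ofReal (τ ^ t) := by
        rw [ENNReal.coe_one, one_mul]
        exact ENNReal.ofReal_le_ofReal (Real.rpow_le_rpow (by positivity) hn.le ht)

lemma exists_carriesFrostman_cantorDust (hlt : l ^ t = (2 ^ Fintype.card ι)⁻¹) (ht : 0 ≤ t) :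
    ∃ C, ∀ x ∈ cantorDust ι l, ∀ R, 0 < R → R ≤ 1 → CarriesFrostman (cantorDust ι l) x R t C := by
  have h1 : l < 1 := by linarith
  set δ := l * (1 - 2 * l) / 2
  have hδ : 0 < δ := by
    have : 0 < 1 - 2 * l := by linarith
    positivity
  lift l to ℝ≥0 using h0.le
  obtain ⟨C, hC⟩ : ∃ C, ∀ y ∈ cantorDust ι l, CarriesFrostman (cantorDust ι l) y 1 t C := by
    refine ⟨_, fun y hy => ⟨cantorMeasure ι l, isProbabilityMeasure_cantorMeasure h0 h1, ?_,
      (isFrostman_cantorMeasure h0 h2 hlt ht).of_le_mul (A := ⟨δ, hδ.le⟩⁻¹) (inv_pos.2 hδ)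
        (inv_mul_cancel₀ hδ.ne').ge⟩⟩
    filter_upwards [ae_mem_cantorDust h0 h1] with x hx
    exact ⟨hx, dist_le_one_of_mem_cantorDust h0 h1 hx hy⟩
  refine ⟨C * l⁻¹ ^ t, fun x hx R hR hR1 => ?_⟩
  obtain ⟨n, hn, hn'⟩ := exists_nat_pow_near_of_lt_one hR hR1 h0 h1
  obtain ⟨b, y, hy, rfl, hb⟩ := exists_similarity_cantorDust h0 h1 (n + 1) hx
  have hln : (0 : ℝ) < l ^ (n + 1) := pow_pos h0 _
  have hmap := (hC y hy).map (f := fun z => b + (l : ℝ) ^ (n + 1) • z) hln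
    (fun x y => by rw [dist_add_left, dist_smul₀, Real.norm_of_nonneg hln.le])
    ((add_left_surjective b).comp (MulAction.surjective₀ hln.ne')) hb
    (isCompact_cantorDust h0 h1).isClosed.measurableSet
  refine hmap.of_le_mul (by simpa using hn.le) (inv_pos.2 h0) ?_
  simpa [pow_succ', h0.ne'] using hn'

end CantorMeasure

section ExtendedDust

/-- The unbounded self-similar set made of all the dilates of the Cantor dust by powers of `l⁻¹`. It
satisfies scale-invariant Frostman conditions at all scales. -/
def extendedDust (ι : Type*) (l : ℝ) : Set (ι → ℝ) := {x | ∃ m : ℕ, l ^ m • x ∈ cantorDust ι l}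

variable {ι : Type*} {l t : ℝ}

lemma zero_mem_extendedDust : (0 : ι → ℝ) ∈ extendedDust ι l := by
  refine ⟨0, fun _ _ => false, ?_⟩
  ext i
  simp [cantorMap, Cardinal.cantorFunction, Cardinal.cantorFunctionAux]

lemma exists_pow_mul_le_one (h1 : l < 1) {a : ℝ} (ha : 0 < a) : ∃ m : ℕ, l ^ m * a ≤ 1 := by
  obtain ⟨m, hm⟩ := exists_pow_lt_of_lt_one (inv_pos.2 ha) h1
  exact ⟨m, (mul_le_mul_of_nonneg_right hm.le ha.le).trans_eq (inv_mul_cancel₀ ha.ne')⟩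

variable (h0 : 0 < l)
include h0

lemma nonneg_of_mem_extendedDust (h1 : l < 1) {x : ι → ℝ} (hx : x ∈ extendedDust ι l) : 0 ≤ x := by
  obtain ⟨m, s, hs⟩ := hx
  have hx : 0 ≤ l ^ m • x := hs ▸ (cantorMap_mem_Icc h0 h1 s).1
  exact fun i => nonneg_of_mul_nonneg_right (hx i) (pow_pos h0 m)

lemma pow_smul_mem_cantorDust (h1 : l < 1) {x : ι → ℝ} (hx : x ∈ cantorDust ι l) (n : ℕ) :
    l ^ n • x ∈ cantorDust ι l := by
  induction n with
  | zero => simpa using hx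
  | succ n ih => simpa [pow_succ', mul_smul] using smul_mem_cantorDust h0 h1 ih

variable [Fintype ι] (h2 : l < 1 / 2)
include h2

lemma mem_cantorDust_of_smul_mem {x : ι → ℝ} (hx : l • x ∈ cantorDust ι l) (hn : ‖x‖ ≤ 1) :
    x ∈ cantorDust ι l := by
  have h1 : l < 1 := by linarith
  obtain ⟨e, y, hy, hxy⟩ := (mem_cantorDust_iff h0 h1).1 hx
  have he : e = fun _ => false := by
    ext i
    by_contra hi
    obtain ⟨s, rfl⟩ := hy
    have hs := (cantorMap_mem_Icc h0 h1 s).1 i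
    have hxi : x i ≤ 1 := (le_abs_self _).trans ((norm_le_pi_norm x i).trans hn)
    have hxyi := congrFun hxy i
    simp only [corner, Pi.add_apply, Pi.smul_apply, smul_eq_mul, Pi.zero_apply,
      Bool.not_eq_false _ ▸ hi, cond_true] at hxyi hs
    nlinarith
  have hxy' : l • x = l • y := by
    rw [hxy, he, show corner (fun _ : ι => false) = 0 from rfl, smul_zero, zero_add]
  rwa [smul_right_injective _ h0.ne' hxy']

lemma pow_smul_mem_of_mem_extendedDust {x : ι → ℝ} (hx : x ∈ extendedDust ι l) {m : ℕ}
    (hm : l ^ m * ‖x‖ ≤ 1) : l ^ m • x ∈ cantorDust ι l := by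
  have h1 : l < 1 := by linarith
  have hdown : ∀ n, l ^ (m + n) • x ∈ cantorDust ι l → l ^ m • x ∈ cantorDust ι l := fun n => by
    induction n with
    | zero => exact id
    | succ n ih =>
      intro h
      rw [← add_assoc, pow_succ', mul_smul] at h
      refine ih (mem_cantorDust_of_smul_mem h0 h2 h ?_)
      rw [norm_smul, Real.norm_of_nonneg (by positivity), pow_add, mul_right_comm]
      exact mul_le_one₀ hm (by positivity) (pow_le_one₀ h0.le h1.le)
  obtain ⟨j, hj⟩ := hx
  exact hdown j (by rw [pow_add, mul_smul]; exact pow_smul_mem_cantorDust h0 h1 hj m)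

omit [Fintype ι] in
lemma isClosed_extendedDust [Finite ι] : IsClosed (extendedDust ι l) := by
  cases nonempty_fintype ι
  refine isSeqClosed_iff_isClosed.1 fun u x hu hux => ?_
  obtain ⟨m, hm⟩ := exists_pow_mul_le_one (l := l) (by linarith) (show 0 < ‖x‖ + 1 by positivity)
  refine ⟨m, (isCompact_cantorDust h0 (by linarith)).isClosed.mem_of_tendsto
    (hux.const_smul (l ^ m)) ?_⟩
  filter_upwards [hux.norm.eventually_le_const (lt_add_one ‖x‖)] with n hn
  exact pow_smul_mem_of_mem_extendedDust h0 h2 (hu n) (hm.trans' (by gcongr))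

lemma exists_carriesFrostman_extendedDust (hlt : l ^ t = (2 ^ Fintype.card ι)⁻¹) (ht : 0 ≤ t) :
    ∃ C, ∀ k ∈ extendedDust ι l, ∀ R, 0 < R → CarriesFrostman (extendedDust ι l) k R t C := by
  obtain ⟨C, hC⟩ := exists_carriesFrostman_cantorDust (ι := ι) h0 h2 hlt ht
  refine ⟨C, fun k hk R hR => ?_⟩
  obtain ⟨m, hm⟩ := exists_pow_mul_le_one (l := l) (by linarith)
    (lt_max_of_lt_right hR : 0 < max ‖k‖ R)
  have hlm : 0 < l ^ m := pow_pos h0 m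
  have hkm := pow_smul_mem_of_mem_extendedDust h0 h2 hk
    (hm.trans' (mul_le_mul_of_nonneg_left (le_max_left _ _) hlm.le))
  have hmap := (hC _ hkm (l ^ m * R) (by positivity)
    (hm.trans' (mul_le_mul_of_nonneg_left (le_max_right _ _) hlm.le))).map (inv_pos.2 hlm)
    (f := fun x => (l ^ m)⁻¹ • x) (K' := extendedDust ι l)
    (fun x y => by rw [dist_smul₀, Real.norm_of_nonneg (inv_pos.2 hlm).le])
    (MulAction.surjective₀ (inv_pos.2 hlm).ne')
    (fun x hx => ⟨m, by rwa [smul_inv_smul₀ hlm.ne']⟩) (isClosed_extendedDust h0 h2).measurableSet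
  rwa [inv_smul_smul₀ hlm.ne', inv_mul_cancel_left₀ hlm.ne'] at hmap

lemma hausdorffMeasure_extendedDust_inter_closedBall {s : ℝ} (hs : 0 ≤ s)
    (hls : 2 ^ Fintype.card ι * l ^ s < 1) :
    μH[s] (extendedDust ι l ∩ closedBall 0 1) = 0 := by
  have h1 : l < 1 := by linarith
  refine measure_mono_null (fun x hx => ?_) (hausdorffMeasure_eq_zero_of_finset_cover h0 h1 hs
    (mod_cast hls) (exists_finset_cover_cantorDust (ι := ι) h0 h1))
  simpa using pow_smul_mem_of_mem_extendedDust h0 h2 hx.1 (m := 0) (by simpa using hx.2)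

lemma volume_ball_inter_thickening_extendedDust_le (n : ℕ) :
    volume (ball 0 1 ∩ thickening (l ^ n) (extendedDust ι l)) ≤
      ENNReal.ofReal (8 ^ Fintype.card ι * ((2 * l) ^ Fintype.card ι) ^ n) := by
  have h1 : l < 1 := by linarith
  obtain ⟨T, hT, hc⟩ := exists_finset_cover_cantorDust (ι := ι) h0 h1 (n + 1)
  have hsub : ball 0 1 ∩ thickening (l ^ n) (extendedDust ι l) ⊆
      ⋃ p ∈ T, closedBall (l⁻¹ • p) (2 * l ^ n) := by
    rintro v ⟨hv, hvK⟩
    obtain ⟨k, hk, hvk⟩ := mem_thickening_iff.1 hvK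
    have hk2 : ‖k‖ ≤ 2 := by
      rw [dist_comm, dist_eq_norm] at hvk
      linarith [norm_le_norm_add_norm_sub' k v, mem_ball_zero_iff.1 hv,
        pow_le_one₀ h0.le h1.le (n := n)]
    obtain ⟨p, hp, hkp⟩ := mem_iUnion₂.1 (hc (pow_smul_mem_of_mem_extendedDust h0 h2 hk (m := 1)
      (by nlinarith [norm_nonneg k])))
    have hkp' : dist k (l⁻¹ • p) ≤ l ^ n := by
      rw [pow_one, mem_closedBall] at hkp
      rw [← inv_smul_smul₀ h0.ne' k, dist_smul₀, Real.norm_of_nonneg (inv_pos.2 h0).le,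
        inv_mul_le_iff₀ h0, ← pow_succ']
      exact hkp
    exact mem_iUnion₂.2 ⟨p, hp, mem_closedBall.2 (by linarith [dist_triangle v k (l⁻¹ • p)])⟩
  calc volume (ball 0 1 ∩ thickening (l ^ n) (extendedDust ι l))
      ≤ ∑ p ∈ T, volume (closedBall (l⁻¹ • p) (2 * l ^ n)) :=
        (measure_mono hsub).trans (measure_biUnion_finset_le _ _)
    _ = T.card * ENNReal.ofReal ((2 * (2 * l ^ n)) ^ Fintype.card ι) := by
        simp only [Real.volume_pi_closedBall _ (show 0 ≤ 2 * l ^ n by positivity),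
          Finset.sum_const, nsmul_eq_mul]
    _ ≤ ENNReal.ofReal ((2 ^ Fintype.card ι) ^ (n + 1)) *
          ENNReal.ofReal ((2 * (2 * l ^ n)) ^ Fintype.card ι) := by
        gcongr
        rw [← ENNReal.ofReal_natCast]
        exact ENNReal.ofReal_le_ofReal (mod_cast hT)
    _ = ENNReal.ofReal (8 ^ Fintype.card ι * ((2 * l) ^ Fintype.card ι) ^ n) := by
        rw [← ENNReal.ofReal_mul (by positivity), pow_succ, ← mul_assoc 2 2, mul_pow _ (l ^ n),
          mul_pow 2 l, mul_pow _ (l ^ _), pow_right_comm l, show (8 : ℝ) = 2 * (2 * 2) by norm_num,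
          mul_pow 2 (2 * 2)]
        ring_nf

lemma exists_volume_ball_inter_thickening_extendedDust_le
    (hl : (2 * l) ^ Fintype.card ι < l) {η : ℝ} (hη : 0 < η) : ∃ r, 0 < r ∧ r ≤ η ∧
      volume (ball 0 1 ∩ thickening r (extendedDust ι l)) ≤ ENNReal.ofReal (η * r) := by
  have hlim : Tendsto (fun n : ℕ => 8 ^ Fintype.card ι * ((2 * l) ^ Fintype.card ι / l) ^ n)
      atTop (𝓝 0) := by
    simpa using (tendsto_pow_atTop_nhds_zero_of_lt_one (by positivity)
      ((div_lt_one h0).2 hl)).const_mul (8 ^ Fintype.card ι : ℝ)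
  have hlim' := tendsto_pow_atTop_nhds_zero_of_lt_one h0.le (by linarith : l < 1)
  obtain ⟨n, hn, hn'⟩ := ((hlim.eventually_le_const hη).and (hlim'.eventually_le_const hη)).exists
  refine ⟨l ^ n, pow_pos h0 n, hn', (volume_ball_inter_thickening_extendedDust_le h0 h2 n).trans ?_⟩
  refine ENNReal.ofReal_le_ofReal ?_
  rwa [div_pow, ← mul_div_assoc, div_le_iff₀ (pow_pos h0 n)] at hn

omit h0 h2 in
theorem exists_isClosed_carriesFrostman_null {t s : ℝ} (ht : 0 < t) (hts : t < s)
    (hs : s + 1 ≤ Fintype.card ι) : ∃ (K : Set (ι → ℝ)) (C : ℝ≥0), IsClosed K ∧ 0 ∈ K ∧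
      (∀ k ∈ K, 0 ≤ k) ∧ (∀ k ∈ K, ∀ R, 0 < R → CarriesFrostman K k R t C) ∧
      μH[s] (K ∩ closedBall 0 1) = 0 ∧
      ∀ η, 0 < η → ∃ r, 0 < r ∧ r ≤ η ∧
        volume (ball 0 1 ∩ thickening r K) ≤ ENNReal.ofReal (η * r) := by
  set d := Fintype.card ι
  set l : ℝ := (2 ^ d)⁻¹ ^ t⁻¹
  have h0 : 0 < l := by positivity
  have hlt : l ^ t = (2 ^ d)⁻¹ := Real.rpow_inv_rpow (by positivity) ht.ne'
  have hd : (1 : ℝ) < d := by linarith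
  have hd0 : d ≠ 0 := by rintro h; norm_num [h] at hd
  have h1 : l < 1 := Real.rpow_lt_one (by positivity)
    (inv_lt_one_of_one_lt₀ (one_lt_pow₀ _root_.one_lt_two hd0))
    (inv_pos.2 ht)
  have hls : 2 ^ d * l ^ s < 1 := by
    calc 2 ^ d * l ^ s < 2 ^ d * l ^ t := by
          gcongr ?_ * ?_
          exact Real.rpow_lt_rpow_of_exponent_gt h0 h1 hts
      _ = 1 := by rw [hlt, mul_inv_cancel₀ (by positivity)]
  have hld : (2 * l) ^ d < l := by
    calc (2 * l) ^ d = 2 ^ d * l ^ (d : ℝ) := by rw [mul_pow, Real.rpow_natCast]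
      _ ≤ 2 ^ d * l ^ (s + 1) := by
          gcongr ?_ * ?_
          exact Real.rpow_le_rpow_of_exponent_ge h0 h1.le hs
      _ = (2 ^ d * l ^ s) * l := by rw [Real.rpow_add_one h0.ne', mul_assoc]
      _ < l := mul_lt_of_lt_one_left h0 hls
  have h2 : l < 1 / 2 := by
    have := (pow_lt_one_iff_of_nonneg (by positivity) hd0).1 (hld.trans h1)
    linarith
  obtain ⟨C, hC⟩ := exists_carriesFrostman_extendedDust (ι := ι) h0 h2 hlt ht.le
  exact ⟨extendedDust ι l, C, isClosed_extendedDust h0 h2, zero_mem_extendedDust,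
    fun _ => nonneg_of_mem_extendedDust h0 h1, hC,
    hausdorffMeasure_extendedDust_inter_closedBall h0 h2 (by linarith) hls,
    fun _ => exists_volume_ball_inter_thickening_extendedDust_le h0 h2 hld⟩

end ExtendedDust

section Double

/-- The space `X` is the double of `V` along `K`: the union of two isometric copies `ι false` and
`ι true` of `V`, glued along `K`. -/
structure IsDouble {V X : Type*} [MetricSpace V] [MetricSpace X] (K : Set V) (ι : Bool → V → X) :
    Prop where
  isometry : ∀ i, Isometry (ι i)
  exists_eq : ∀ x, ∃ i v, ι i v = x
  glue : ∀ k ∈ K, ∀ i j, ι i k = ι j k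
  exists_dist_eq : ∀ i j, i ≠ j → ∀ v w, ∃ k ∈ K, dist (ι i v) (ι j w) = dist v k + dist k w

lemma exists_iInf_dist_add_dist_eq {V : Type*} [MetricSpace V] [ProperSpace V] {K : Set V}
    (hK : IsClosed K) (hne : K.Nonempty) (x y : V) :
    ∃ k ∈ K, (⨅ p : K, dist x p + dist y p) = dist x k + dist y k := by
  obtain ⟨k₀, hk₀⟩ := hne
  have hlim : Tendsto (fun p : V => dist x p + dist y p) (cocompact V) atTop :=
    tendsto_atTop_mono (fun p => by rw [dist_comm p x]; linarith [dist_nonneg (x := y) (y := p)])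
      (tendsto_dist_right_cocompact_atTop x)
  have hcont : ContinuousOn (fun p : V => dist x p + dist y p) K := by fun_prop
  obtain ⟨k, hk, hmin⟩ := hcont.exists_isMinOn' hK hk₀
    ((hlim.eventually_ge_atTop _).filter_mono inf_le_left)
  have : Nonempty K := ⟨⟨k₀, hk₀⟩⟩
  exact ⟨k, hk, IsLeast.csInf_eq ⟨⟨⟨k, hk⟩, rfl⟩, by rintro _ ⟨p, rfl⟩; exact hmin p.2⟩⟩

theorem exists_isDouble.{u} {V : Type u} [MetricSpace V] [ProperSpace V] {K : Set V}
    (hK : IsClosed K) (hne : K.Nonempty) :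
    ∃ (X : Type u) (_ : MetricSpace X) (ι : Bool → V → X), IsDouble K ι := by
  have : Nonempty K := hne.to_subtype
  have hΦ : Isometry (Subtype.val : K → V) := isometry_subtype_coe
  have hdist (v w : V) : ∃ k ∈ K,
      dist (toGlueL hΦ hΦ v) (toGlueR hΦ hΦ w) = dist v k + dist w k := by
    obtain ⟨k, hk, h⟩ := exists_iInf_dist_add_dist_eq hK hne v w
    refine ⟨k, hk, .trans ?_ h⟩
    exact add_zero (⨅ p : K, dist v p + dist w p)
  refine ⟨GlueSpace hΦ hΦ, inferInstance, fun i => bif i then toGlueR hΦ hΦ else toGlueL hΦ hΦ,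
    ?_, ?_, ?_, ?_⟩
  · rintro (_ | _)
    exacts [toGlueL_isometry hΦ hΦ, toGlueR_isometry hΦ hΦ]
  · intro x
    obtain ⟨v | v, hv⟩ := Quotient.exists_rep x
    exacts [⟨false, v, hv⟩, ⟨true, v, hv⟩]
  · intro k hk
    have hLR : toGlueL hΦ hΦ k = toGlueR hΦ hΦ k := congrFun (toGlue_commute hΦ hΦ) ⟨k, hk⟩
    rintro (_ | _) (_ | _) <;> simp [hLR]
  · rintro (_ | _) (_ | _) hij v w
    · exact absurd rfl hij
    · obtain ⟨k, hk, h⟩ := hdist v w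
      exact ⟨k, hk, by simp [h, dist_comm w]⟩
    · obtain ⟨k, hk, h⟩ := hdist w v
      exact ⟨k, hk, by simp [dist_comm (toGlueR hΦ hΦ v), h, dist_comm w, add_comm]⟩
    · exact absurd rfl hij

namespace IsDouble

variable {V X : Type*} [MetricSpace V] [MetricSpace X] {K : Set V} {ι : Bool → V → X}

lemma dist_le_dist (H : IsDouble K ι) (i j : Bool) (v w : V) :
    dist v w ≤ dist (ι i v) (ι j w) := by
  rcases eq_or_ne i j with rfl | hij
  · exact ((H.isometry i).dist_eq v w).ge
  · obtain ⟨k, -, hk⟩ := H.exists_dist_eq i j hij v w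
    exact hk ▸ dist_triangle v k w

lemma eq_of_eq (H : IsDouble K ι) {i j : Bool} {v w : V} (h : ι i v = ι j w) : v = w :=
  dist_le_zero.1 ((H.dist_le_dist i j v w).trans_eq (by rw [h, dist_self]))

lemma mem_of_eq (H : IsDouble K ι) {i j : Bool} (hij : i ≠ j) {v w : V} (h : ι i v = ι j w) :
    v ∈ K := by
  obtain ⟨k, hk, hd⟩ := H.exists_dist_eq i j hij v w
  rw [h, dist_self] at hd
  have hvk : v = k :=
    dist_le_zero.1 (by linarith [dist_nonneg (x := k) (y := w)])
  exact hvk ▸ hk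

lemma preimage_ball (H : IsDouble K ι) (i : Bool) (v : V) (r : ℝ) :
    ι i ⁻¹' ball (ι i v) r = ball v r :=
  (H.isometry i).preimage_ball v r

lemma preimage_ball_subset (H : IsDouble K ι) (i j : Bool) (v : V) (r : ℝ) :
    ι j ⁻¹' ball (ι i v) r ⊆ ball v r := fun w hw => (H.dist_le_dist j i w v).trans_lt hw

lemma preimage_ball_of_mem (H : IsDouble K ι) {k : V} (hk : k ∈ K) (i j : Bool) (r : ℝ) :
    ι j ⁻¹' ball (ι i k) r = ball k r := by
  rw [H.glue k hk i j, H.preimage_ball]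

lemma exists_lipschitzWith_leftInverse (H : IsDouble K ι) :
    ∃ π : X → V, LipschitzWith 1 π ∧ ∀ i v, π (ι i v) = v := by
  choose i π hπ using H.exists_eq
  refine ⟨π, LipschitzWith.of_dist_le_mul fun x y => ?_, fun j v => H.eq_of_eq (hπ _)⟩
  simpa [hπ] using H.dist_le_dist (i x) (i y) (π x) (π y)

lemma properSpace [ProperSpace V] (H : IsDouble K ι) : ProperSpace X := by
  refine ⟨fun x r => ?_⟩
  obtain ⟨i, v, rfl⟩ := H.exists_eq x
  refine (isCompact_iUnion fun j => (isCompact_closedBall v r).image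
    (H.isometry j).continuous).of_isClosed_subset isClosed_closedBall fun y hy => ?_
  obtain ⟨j, w, rfl⟩ := H.exists_eq y
  exact mem_iUnion.2 ⟨j, w, (H.dist_le_dist j i w v).trans hy, rfl⟩

lemma isGeodesicSpace (H : IsDouble K ι) (hV : IsGeodesicSpace V) : IsGeodesicSpace X := by
  intro x y
  obtain ⟨i, v, rfl⟩ := H.exists_eq x
  obtain ⟨j, w, rfl⟩ := H.exists_eq y
  have hgeod (i : Bool) (v w : V) : JoinedByGeodesic (ι i v) (ι i w) :=
    JoinedByGeodesic.map (hV v w) (H.isometry i)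
  rcases eq_or_ne i j with rfl | hij
  · exact hgeod i v w
  · obtain ⟨k, hk, hd⟩ := H.exists_dist_eq i j hij v w
    refine (hgeod i v k).trans (H.glue k hk i j ▸ hgeod j k w) ?_
    rw [hd, (H.isometry i).dist_eq, H.glue k hk i j, (H.isometry j).dist_eq]

/-- A connected set meeting both copies of `V` has to cross `K`. -/
lemma separatesIn [CompleteSpace V] (H : IsDouble K ι) {S E F G : Set X}
    (hS : ∀ k ∈ K, ∀ i, ι i k ∈ G → ι i k ∈ S) (hE : IsConnected E) (hF : IsConnected F)
    (hEG : E ⊆ G \ S) (hFG : F ⊆ G \ S) (hE₀ : E ⊆ range (ι false)) (hF₁ : F ⊆ range (ι true)) :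
    SeparatesIn S E F G := by
  obtain ⟨x, hx⟩ := hE.nonempty
  obtain ⟨y, hy⟩ := hF.nonempty
  refine ⟨x, hEG hx, y, hFG hy, hE.isPreconnected.subset_connectedComponentIn hx hEG,
    hF.isPreconnected.subset_connectedComponentIn hy hFG, fun heq => ?_⟩
  set Z := connectedComponentIn (G \ S) x
  have hι (i : Bool) : IsClosed (range (ι i)) := (H.isometry i).isClosedEmbedding.isClosed_range
  have hcover : Z ⊆ range (ι false) ∪ range (ι true) := fun z _ => by
    obtain ⟨i, v, rfl⟩ := H.exists_eq z
    cases i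
    exacts [Or.inl ⟨v, rfl⟩, Or.inr ⟨v, rfl⟩]
  obtain ⟨_, hzZ, ⟨v, rfl⟩, ⟨w, hw⟩⟩ :=
    isPreconnected_closed_iff.1 isPreconnected_connectedComponentIn _ _ (hι false) (hι true) hcover
      ⟨x, mem_connectedComponentIn (hEG hx), hE₀ hx⟩
      ⟨y, heq.ge (mem_connectedComponentIn (hFG hy)), hF₁ hy⟩
  have hz := connectedComponentIn_subset _ _ hzZ
  exact hz.2 (hS v (H.mem_of_eq (by decide) hw.symm) false hz.1)

end IsDouble

end Double

section DoubleMeasure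

/-- The measure on a double of `V` whose restriction to either copy of `V` is `μ`; the part of `V`
along which the copies are glued is counted twice. -/
noncomputable def doubleMeasure {V X : Type*} [MeasurableSpace V] [MeasurableSpace X]
    (μ : Measure V) (ι : Bool → V → X) : Measure X :=
  ∑ i, μ.map (ι i)

namespace IsDouble

section Metric

variable {V X : Type*} [MetricSpace V] [CompleteSpace V] [MeasurableSpace V] [BorelSpace V]
  [MetricSpace X] [MeasurableSpace X] [BorelSpace X] {K : Set V} {ι : Bool → V → X}

lemma measurableEmbedding (H : IsDouble K ι) (i : Bool) : MeasurableEmbedding (ι i) :=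
  (H.isometry i).isClosedEmbedding.measurableEmbedding

variable (μ : Measure V)

lemma doubleMeasure_apply (H : IsDouble K ι) (A : Set X) :
    doubleMeasure μ ι A = ∑ i, μ (ι i ⁻¹' A) := by
  simp [doubleMeasure, (H.measurableEmbedding _).map_apply]

lemma setLIntegral_doubleMeasure (H : IsDouble K ι) (A : Set X) (f : X → ℝ≥0∞) :
    ∫⁻ x in A, f x ∂doubleMeasure μ ι = ∑ i, ∫⁻ v in ι i ⁻¹' A, f (ι i v) ∂μ := by
  simp [doubleMeasure, Measure.restrict_add, lintegral_add_measure,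
    (H.measurableEmbedding _).restrict_map, (H.measurableEmbedding _).lintegral_map]

lemma measure_le_doubleMeasure_image (H : IsDouble K ι) (i : Bool) (A : Set V) :
    μ A ≤ doubleMeasure μ ι (ι i '' A) := by
  rw [H.doubleMeasure_apply]
  exact (measure_mono (subset_preimage_image _ _)).trans
    (Finset.single_le_sum (f := fun j => μ (ι j ⁻¹' (ι i '' A))) (fun _ _ => zero_le)
      (Finset.mem_univ i))

lemma measure_ball_le_doubleMeasure (H : IsDouble K ι) (i : Bool) (v : V) (r : ℝ) :
    μ (ball v r) ≤ doubleMeasure μ ι (ball (ι i v) r) :=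
  (H.measure_le_doubleMeasure_image μ i _).trans
    (measure_mono (image_subset_iff.2 (H.preimage_ball i v r).ge))

lemma doubleMeasure_ball_le (H : IsDouble K ι) (i : Bool) (v : V) (r : ℝ) :
    doubleMeasure μ ι (ball (ι i v) r) ≤ 2 * μ (ball v r) := by
  rw [H.doubleMeasure_apply]
  simpa using Finset.sum_le_card_nsmul Finset.univ _ _ fun j _ =>
    measure_mono (μ := μ) (H.preimage_ball_subset i j v r)

omit [CompleteSpace V] in
lemma isLocallyFiniteMeasure_doubleMeasure [ProperSpace V]
    [IsLocallyFiniteMeasure μ] (H : IsDouble K ι) :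
    IsLocallyFiniteMeasure (doubleMeasure μ ι) := by
  refine ⟨fun x => ⟨ball x 1, ball_mem_nhds x one_pos, ?_⟩⟩
  obtain ⟨i, v, rfl⟩ := H.exists_eq x
  exact (H.doubleMeasure_ball_le μ i v 1).trans_lt
    (ENNReal.mul_lt_top (by simp) measure_ball_lt_top)

end Metric

section Normed

variable {V X : Type*} [NormedAddCommGroup V] [NormedSpace ℝ V] [FiniteDimensional ℝ V]
  [MeasurableSpace V] [BorelSpace V] [MetricSpace X] [MeasurableSpace X] [BorelSpace X]
  {K : Set V} {ι : Bool → V → X} (μ : Measure V) [μ.IsAddHaarMeasure]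

lemma ahlforsRegular_doubleMeasure (H : IsDouble K ι) :
    AhlforsRegular (doubleMeasure μ ι) (Module.finrank ℝ V) (μ.real (ball 0 1))
      (2 * μ.real (ball 0 1)) := by
  have hpos : 0 < μ.real (ball (0 : V) 1) :=
    ENNReal.toReal_pos (measure_ball_pos μ 0 one_pos).ne' measure_ball_lt_top.ne
  have hball (v : V) {r : ℝ} (hr : 0 < r) :
      ENNReal.ofReal (μ.real (ball (0 : V) 1) * r ^ (Module.finrank ℝ V : ℝ)) =
        μ (ball v r) := by
    rw [Measure.addHaar_ball_of_pos μ v hr, mul_comm, ENNReal.ofReal_mul (by positivity),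
      Real.rpow_natCast, ofReal_measureReal]
  refine ⟨hpos, by linarith, fun x r hr _ => ?_⟩
  obtain ⟨i, v, rfl⟩ := H.exists_eq x
  rw [mul_assoc, ENNReal.ofReal_mul zero_le_two, ENNReal.ofReal_ofNat, hball v hr]
  exact ⟨H.measure_ball_le_doubleMeasure μ i v r, H.doubleMeasure_ball_le μ i v r⟩

lemma doubleMeasure_ball_mul_le (H : IsDouble K ι) (x : X) {a r : ℝ} (ha : 0 < a) (hr : 0 < r) :
    doubleMeasure μ ι (ball x (a * r)) ≤
      ENNReal.ofReal (2 * a ^ Module.finrank ℝ V) * doubleMeasure μ ι (ball x r) := by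
  obtain ⟨i, v, rfl⟩ := H.exists_eq x
  calc doubleMeasure μ ι (ball (ι i v) (a * r)) ≤ 2 * μ (ball v (a * r)) :=
        H.doubleMeasure_ball_le μ i v _
    _ = ENNReal.ofReal (2 * a ^ Module.finrank ℝ V) * μ (ball v r) := by
        rw [Measure.addHaar_ball_of_pos μ v hr, Measure.addHaar_ball_of_pos μ v (by positivity),
          mul_pow, ENNReal.ofReal_mul zero_le_two, ENNReal.ofReal_mul (by positivity),
          ENNReal.ofReal_ofNat]
        ring
    _ ≤ _ := by gcongr; exact H.measure_ball_le_doubleMeasure μ i v r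

omit [FiniteDimensional ℝ V] [MeasurableSpace V] [BorelSpace V] [MeasurableSpace X]
  [BorelSpace X] in
lemma le_diam_ball [Nontrivial V] (H : IsDouble K ι) (x : X) {r : ℝ} (hr : 0 ≤ r) :
    r ≤ diam (ball x r) := by
  obtain ⟨i, v, rfl⟩ := H.exists_eq x
  calc r ≤ diam (ball v r) := by rw [diam_ball_eq v hr]; linarith
    _ = diam (ι i '' ball v r) := ((H.isometry i).diam_image _).symm
    _ ≤ diam (ball (ι i v) r) :=
        diam_mono (by rw [image_subset_iff, H.preimage_ball]) isBounded_ball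

end Normed

end IsDouble

end DoubleMeasure

section PoincareInequality

lemma IsUpperGradientOn.ofReal_abs_sub_le_segmentIntegral {V X : Type*} [NormedAddCommGroup V]
    [NormedSpace ℝ V] [PseudoMetricSpace X] {u : X → ℝ} {ρ : X → ℝ≥0∞}
    (hu : IsUpperGradientOn u ρ univ) {f : V → X} (hf : LipschitzWith 1 f) (x y : V) :
    ENNReal.ofReal |u (f y) - u (f x)| ≤
      ENNReal.ofReal (dist x y) * segmentIntegral (ρ ∘ f) x y := by
  rcases eq_or_ne x y with rfl | hxy
  · simp
  set L := dist x y with hLdef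
  have hL : 0 < L := dist_pos.2 hxy
  set γ : ℝ → X := fun t => f (AffineMap.lineMap x y (t / L))
  have hγL : LipschitzWith 1 γ := by
    refine LipschitzWith.of_dist_le_mul fun s t => (hf.dist_le_mul _ _).trans_eq ?_
    rw [dist_lineMap_lineMap, ← hLdef, Real.dist_eq, Real.dist_eq, ← _root_.sub_div, abs_div,
      abs_of_pos hL, div_mul_cancel₀ _ hL.ne']
  calc ENNReal.ofReal |u (f y) - u (f x)| ≤ ∫⁻ t in Icc 0 L, ρ (γ t) := by
        simpa [γ, hL.ne'] using hu L hL.le γ hγL.lipschitzOnWith (mapsTo_univ _ _)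
    _ = ∫⁻ t in (L * ·) '' Icc 0 1, ρ (γ t) := by
        rw [image_mul_left_Icc hL.le zero_le_one, mul_zero, mul_one]
    _ = ∫⁻ τ in Icc (0 : ℝ) 1, ENNReal.ofReal |L| * ρ (γ (L * τ)) :=
        lintegral_image_eq_lintegral_abs_deriv_mul measurableSet_Icc
          (fun τ _ => (hasDerivAt_const_mul L).hasDerivWithinAt)
          (mul_right_injective₀ hL.ne').injOn _
    _ = ENNReal.ofReal L * segmentIntegral (ρ ∘ f) x y := by
        rw [lintegral_const_mul' _ _ ENNReal.ofReal_ne_top, abs_of_pos hL]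
        simp [γ, segmentIntegral, mul_div_cancel_left₀, hL.ne']

variable {V : Type*} [NormedAddCommGroup V] [NormedSpace ℝ V] [FiniteDimensional ℝ V]
  [MeasurableSpace V] [BorelSpace V] {μ : Measure V} [μ.IsAddHaarMeasure] {p t δ : ℝ} {C : ℝ≥0}
  {B : Set V} {ν : Measure V} [IsProbabilityMeasure ν]

/-- Several functions are controlled from one and the same base point `k`, so that functions that
agree at `k` can be compared with a single constant. -/
lemma IsFrostman.exists_sum_setLIntegral_abs_sub_le (hF : IsFrostman ν δ t C) (hB : Convex ℝ B)
    (hBm : MeasurableSet B) (hδ : ∀ x ∈ B, ∀ y ∈ B, dist x y ≤ δ) (hν : ∀ᵐ k ∂ν, k ∈ B)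
    (hp : 1 ≤ p) {J : Type*} {s : Finset J} {u : J → V → ℝ} {w : J → V → ℝ≥0∞}
    (hw : ∀ j, Measurable (w j)) (huw : ∀ j x y,
      ENNReal.ofReal |u j y - u j x| ≤ ENNReal.ofReal (dist x y) * segmentIntegral (w j) x y)
    {P : V → Prop} (hP : ∀ᵐ k ∂ν, P k) :
    ∃ k, P k ∧ ∑ j ∈ s, ∫⁻ x in B, ENNReal.ofReal |u j x - u j k| ∂μ ≤
      ENNReal.ofReal δ * (segmentConst (Module.finrank ℝ V) p t C *
        ∑ j ∈ s, (∫⁻ x in B, w j x ^ p ∂μ) ^ (1 / p) * μ B ^ (1 - 1 / p)) := by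
  have hmeas (j : J) : Measurable fun k => ∫⁻ x in B, segmentIntegral (w j) k x ∂μ :=
    (measurable_segmentIntegral (hw j)).lintegral_prod_right'
  set F : V → ℝ≥0∞ := fun k => ∑ j ∈ s, ∫⁻ x in B, segmentIntegral (w j) k x ∂μ
  obtain ⟨k, hk, hkF⟩ := exists_notMem_null_le_lintegral (μ := ν) (f := F)
    (Finset.measurable_sum s fun j _ => hmeas j).aemeasurable (hν.and hP)
  obtain ⟨hkB, hkP⟩ : k ∈ B ∧ P k := notMem_compl_iff.1 hk
  refine ⟨k, hkP, ?_⟩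
  calc ∑ j ∈ s, ∫⁻ x in B, ENNReal.ofReal |u j x - u j k| ∂μ
      ≤ ∑ j ∈ s, ∫⁻ x in B, ENNReal.ofReal δ * segmentIntegral (w j) k x ∂μ := by
        refine Finset.sum_le_sum fun j _ => setLIntegral_mono' hBm fun x hx => ?_
        refine (huw j k x).trans ?_
        gcongr
        exact hδ k hkB x hx
    _ = ENNReal.ofReal δ * F k := by
        simp only [lintegral_const_mul' _ _ ENNReal.ofReal_ne_top, F, Finset.mul_sum]
    _ ≤ ENNReal.ofReal δ * ∑ j ∈ s, ∫⁻ k, ∫⁻ x in B, segmentIntegral (w j) k x ∂μ ∂ν := by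
        rw [← lintegral_finsetSum s fun j _ => hmeas j]
        gcongr
    _ ≤ _ := by
        gcongr
        rw [Finset.mul_sum]
        gcongr with j
        exact hF.lintegral_setLIntegral_segmentIntegral_le hB hBm hδ hν hp (hw j)

namespace IsDouble

variable {X : Type*} [MetricSpace X] [MeasurableSpace X] [BorelSpace X] {K : Set V}
  {ι : Bool → V → X} {u : X → ℝ} {ρ : X → ℝ≥0∞}

lemma exists_setLIntegral_abs_sub_le (H : IsDouble K ι) (hF : IsFrostman ν δ t C)
    (hB : Convex ℝ B) (hBm : MeasurableSet B) (hδ : ∀ x ∈ B, ∀ y ∈ B, dist x y ≤ δ)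
    (hν : ∀ᵐ k ∂ν, k ∈ B) (hp : 1 ≤ p) (hρ : Measurable ρ) (hu : IsUpperGradientOn u ρ univ)
    {A : Set X} {s : Finset Bool} (hs : ∀ i ∈ s, ι i ⁻¹' A = B) (hs' : ∀ i ∉ s, ι i ⁻¹' A = ∅)
    (hP : ∀ᵐ k ∂ν, ∃ x, ∀ i ∈ s, ι i k = x) :
    ∃ c, ∫⁻ x in A, ENNReal.ofReal |u x - c| ∂doubleMeasure μ ι ≤
      2 * ENNReal.ofReal δ * segmentConst (Module.finrank ℝ V) p t C *
        ((∫⁻ x in A, ρ x ^ p ∂doubleMeasure μ ι) ^ (1 / p) *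
          doubleMeasure μ ι A ^ (1 - 1 / p)) := by
  have h1p : 0 ≤ 1 - 1 / p := by
    rw [one_div]; exact sub_nonneg.2 (inv_le_one_of_one_le₀ hp)
  have hint (f : X → ℝ≥0∞) :
      ∫⁻ x in A, f x ∂doubleMeasure μ ι = ∑ i ∈ s, ∫⁻ v in B, f (ι i v) ∂μ := by
    rw [H.setLIntegral_doubleMeasure, ← Finset.sum_subset s.subset_univ fun i _ hi => by
      rw [hs' i hi, Measure.restrict_empty, lintegral_zero_measure]]
    exact Finset.sum_congr rfl fun i hi => by rw [hs i hi]
  obtain ⟨k, ⟨x, hx⟩, hk⟩ := hF.exists_sum_setLIntegral_abs_sub_le (μ := μ) hB hBm hδ hν hp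
    (s := s) (fun i => hρ.comp (H.measurableEmbedding i).measurable)
    (fun i => hu.ofReal_abs_sub_le_segmentIntegral (H.isometry i).lipschitz) hP
  refine ⟨u x, ?_⟩
  set W := (∫⁻ x in A, ρ x ^ p ∂doubleMeasure μ ι) ^ (1 / p) * doubleMeasure μ ι A ^ (1 - 1 / p)
  have hW (i : Bool) (hi : i ∈ s) :
      (∫⁻ v in B, (ρ ∘ ι i) v ^ p ∂μ) ^ (1 / p) * μ B ^ (1 - 1 / p) ≤ W := by
    refine mul_le_mul' (ENNReal.rpow_le_rpow ?_ (by positivity)) (ENNReal.rpow_le_rpow ?_ h1p)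
    · rw [hint]
      exact Finset.single_le_sum (f := fun i => ∫⁻ v in B, ρ (ι i v) ^ p ∂μ)
        (fun _ _ => zero_le) hi
    · rw [H.doubleMeasure_apply, ← hs i hi]
      exact Finset.single_le_sum (f := fun j => μ (ι j ⁻¹' A)) (fun _ _ => zero_le)
        (Finset.mem_univ i)
  calc ∫⁻ x' in A, ENNReal.ofReal |u x' - u x| ∂doubleMeasure μ ι
      = ∑ i ∈ s, ∫⁻ v in B, ENNReal.ofReal |u (ι i v) - u (ι i k)| ∂μ := by
        rw [hint]
        exact Finset.sum_congr rfl fun i hi => by rw [hx i hi]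
    _ ≤ ENNReal.ofReal δ * (segmentConst (Module.finrank ℝ V) p t C * ∑ _ ∈ s, W) := by
        refine hk.trans ?_
        gcongr with i hi
        exact hW i hi
    _ ≤ ENNReal.ofReal δ * (segmentConst (Module.finrank ℝ V) p t C * (2 * W)) := by
        gcongr
        rw [Finset.sum_const, nsmul_eq_mul]
        gcongr
        exact_mod_cast s.card_le_univ
    _ = _ := by ring

omit [IsProbabilityMeasure ν] in
lemma exists_setLIntegral_ball_abs_sub_le_of_mem (H : IsDouble K ι) {k : V} (hk : k ∈ K) {r : ℝ}
    (hr : 0 < r) (hK : CarriesFrostman K k r t C) (hp : 1 ≤ p) (hρ : Measurable ρ)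
    (hu : IsUpperGradientOn u ρ univ) (i : Bool) :
    ∃ c, ∫⁻ x in ball (ι i k) (2 * r), ENNReal.ofReal |u x - c| ∂doubleMeasure μ ι ≤
      2 * ENNReal.ofReal (4 * r) * segmentConst (Module.finrank ℝ V) p t (C * 4 ^ t) *
        ((∫⁻ x in ball (ι i k) (2 * r), ρ x ^ p ∂doubleMeasure μ ι) ^ (1 / p) *
          doubleMeasure μ ι (ball (ι i k) (2 * r)) ^ (1 - 1 / p)) := by
  obtain ⟨ν, hν, hνK, hνF⟩ := hK
  refine H.exists_setLIntegral_abs_sub_le (hνF.of_le_mul (A := 4) (δ' := 4 * r) four_pos (by simp))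
    (convex_ball k (2 * r)) measurableSet_ball (fun x hx y hy => ?_) ?_ hp hρ hu
    (s := Finset.univ) (fun j _ => H.preimage_ball_of_mem hk i j _) (by simp) ?_
  · linarith [dist_triangle_right x y k, mem_ball.1 hx, mem_ball.1 hy]
  · filter_upwards [hνK] with x hx using closedBall_subset_ball (by linarith) hx.2
  · filter_upwards [hνK] with x hx using ⟨ι i x, fun j _ => H.glue x hx.1 j i⟩

lemma exists_setLIntegral_ball_abs_sub_le_of_le_dist (H : IsDouble K ι) {v : V} {r : ℝ}
    (hr : 0 < r) (hv : ∀ k ∈ K, r ≤ dist k v) (hp : 1 ≤ p) (hρ : Measurable ρ)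
    (hu : IsUpperGradientOn u ρ univ) (i : Bool) :
    ∃ c, ∫⁻ x in ball (ι i v) r, ENNReal.ofReal |u x - c| ∂doubleMeasure μ ι ≤
      2 * ENNReal.ofReal (2 * r) *
        segmentConst (Module.finrank ℝ V) p (Module.finrank ℝ V)
          (1 * 2 ^ (Module.finrank ℝ V : ℝ)) *
        ((∫⁻ x in ball (ι i v) r, ρ x ^ p ∂doubleMeasure μ ι) ^ (1 / p) *
          doubleMeasure μ ι (ball (ι i v) r) ^ (1 - 1 / p)) := by
  have := ProbabilityTheory.cond_isProbabilityMeasure_of_finite (measure_ball_pos μ v hr).ne'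
    measure_ball_lt_top.ne
  refine H.exists_setLIntegral_abs_sub_le
    ((isFrostman_cond_ball (μ := μ) v hr).of_le_mul (A := 2) (δ' := 2 * r) two_pos (by simp))
    (convex_ball v r) measurableSet_ball (fun x hx y hy => ?_)
    (ProbabilityTheory.ae_cond_mem measurableSet_ball) hp hρ hu (s := {i}) ?_ ?_ ?_
  · linarith [dist_triangle_right x y v, mem_ball.1 hx, mem_ball.1 hy]
  · simp [H.preimage_ball]
  · refine fun j hj => eq_empty_of_forall_notMem fun w hw => ?_
    obtain ⟨k, hk, hd⟩ := H.exists_dist_eq j i (by simpa using hj) w v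
    have hlt : dist (ι j w) (ι i v) < r := hw
    linarith [hv k hk, dist_nonneg (x := w) (y := k)]
  · exact ae_of_all _ fun k => ⟨ι i k, by simp⟩

/-- Near `K` the two copies are compared through points of `K` chosen at random with the Frostman
measure; far from `K` the ball lies in a single copy. -/
lemma exists_subset_setLIntegral_abs_sub_le (H : IsDouble K ι)
    (hK : ∀ k ∈ K, ∀ R, 0 < R → CarriesFrostman K k R t C) (hp : 1 ≤ p)
    (ht : Module.finrank ℝ V - p < t) :
    ∃ D : ℝ≥0, ∀ (u : X → ℝ) (ρ : X → ℝ≥0∞), Measurable ρ → IsUpperGradientOn u ρ univ →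
      ∀ (x : X) (r : ℝ), 0 < r → ∃ (c : ℝ) (A : Set X), ball x r ⊆ A ∧ A ⊆ ball x (3 * r) ∧
        ∫⁻ y in A, ENNReal.ofReal |u y - c| ∂doubleMeasure μ ι ≤ ENNReal.ofReal (D * r) *
          ((∫⁻ y in A, ρ y ^ p ∂doubleMeasure μ ι) ^ (1 / p) *
            doubleMeasure μ ι A ^ (1 - 1 / p)) := by
  have hp0 : 0 < p := one_pos.trans_le hp
  set d := Module.finrank ℝ V
  have hconst (a : ℝ≥0) {S : ℝ≥0∞} (hS : S ≠ ⊤) {D : ℝ≥0} (hD : 2 * a * S.toNNReal ≤ D) {r : ℝ} :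
      2 * ENNReal.ofReal (a * r) * S ≤ ENNReal.ofReal (D * r) := by
    rw [ENNReal.ofReal_mul a.coe_nonneg, ENNReal.ofReal_mul D.coe_nonneg,
      ENNReal.ofReal_coe_nnreal, ENNReal.ofReal_coe_nnreal, ← ENNReal.coe_toNNReal hS]
    calc (2 * (a * ENNReal.ofReal r) * S.toNNReal : ℝ≥0∞)
        = (2 * a * S.toNNReal : ℝ≥0) * ENNReal.ofReal r := by push_cast; ring
      _ ≤ D * ENNReal.ofReal r := by gcongr
  have hnear := segmentConst_ne_top (C := C * 4 ^ t) hp0 ht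
  have hfar := segmentConst_ne_top (C := 1 * 2 ^ (d : ℝ)) hp0 (sub_lt_self (d : ℝ) hp0)
  refine ⟨max (2 * 4 * (segmentConst d p t (C * 4 ^ t)).toNNReal)
    (2 * 2 * (segmentConst d p d (1 * 2 ^ (d : ℝ))).toNNReal), fun u ρ hρ hu x r hr => ?_⟩
  obtain ⟨i, v, rfl⟩ := H.exists_eq x
  by_cases hv : ∃ k ∈ K, dist k v < r
  · obtain ⟨k, hk, hkv⟩ := hv
    obtain ⟨c, hc⟩ := H.exists_setLIntegral_ball_abs_sub_le_of_mem (μ := μ) hk hr (hK k hk r hr) hp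
      hρ hu i
    rw [← (H.isometry i).dist_eq] at hkv
    refine ⟨c, _, ball_subset_ball' (by rw [dist_comm]; linarith), ball_subset_ball' (by linarith),
      hc.trans ?_⟩
    gcongr
    exact hconst 4 hnear (le_max_left _ _)
  · push Not at hv
    obtain ⟨c, hc⟩ := H.exists_setLIntegral_ball_abs_sub_le_of_le_dist (μ := μ) hr hv hp hρ hu i
    refine ⟨c, _, Subset.rfl, ball_subset_ball (by linarith), hc.trans ?_⟩
    gcongr
    exact hconst 2 hfar (le_max_right _ _)

theorem exists_weakPoincare_doubleMeasure [Nontrivial V] (H : IsDouble K ι)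
    (hK : ∀ k ∈ K, ∀ R, 0 < R → CarriesFrostman K k R t C) (hp : 1 ≤ p)
    (ht : Module.finrank ℝ V - p < t) :
    ∃ CP, 1 ≤ CP ∧ WeakPoincare (doubleMeasure μ ι) p CP 3 := by
  have h1p : 0 ≤ 1 - 1 / p := by
    rw [one_div]; exact sub_nonneg.2 (inv_le_one_of_one_le₀ hp)
  have := H.properSpace
  have := H.isLocallyFiniteMeasure_doubleMeasure μ
  obtain ⟨D, hD⟩ := H.exists_subset_setLIntegral_abs_sub_le (μ := μ) hK hp ht
  set a : ℝ := 2 * 3 ^ Module.finrank ℝ V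
  refine ⟨max 1 (2 * a * D), le_max_left _ _, fun u hu ρ hρ huρ x r hr => ?_⟩
  obtain ⟨c, A, hxA, hA, hc⟩ := hD u ρ hρ huρ x r hr
  obtain ⟨i, v, rfl⟩ := H.exists_eq x
  calc _ ≤ 2 * ENNReal.ofReal a * ENNReal.ofReal (D * r) *
        (⨍⁻ y in ball (ι i v) (3 * r), ρ y ^ p ∂doubleMeasure μ ι) ^ (1 / p) := by
        refine ofReal_average_abs_sub_average_le_laverage hp (hxA.trans hA)
          (((measure_ball_pos μ v hr).trans_le (H.measure_ball_le_doubleMeasure μ i v r)).ne')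
          measure_ball_lt_top.ne (H.doubleMeasure_ball_mul_le μ _ three_pos hr)
          ((hu.integrableOn_isCompact (isCompact_closedBall _ r)).mono_set ball_subset_closedBall)
          c ((lintegral_mono_set hxA).trans (hc.trans ?_))
        gcongr
    _ ≤ _ := by
        gcongr
        rw [← ENNReal.ofReal_ofNat 2, ← ENNReal.ofReal_mul zero_le_two,
          ← ENNReal.ofReal_mul (by positivity), ← mul_assoc]
        gcongr
        exacts [le_max_right _ _, H.le_diam_ball _ hr.le]

end IsDouble

end PoincareInequality

section PathModulus

section Concatenation

variable {Y : Type*} {g h : ℝ → Y} {a b c : ℝ}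

lemma eqOn_ite_le_Icc_right (hgh : g b = h b) :
    EqOn (fun t => if t ≤ b then g t else h t) h (Icc b c) := by
  intro t ht
  rcases ht.1.eq_or_lt with rfl | hlt
  · simpa using hgh
  · exact if_neg hlt.not_ge

lemma image_ite_le_Icc (hab : a ≤ b) (hbc : b ≤ c) (hgh : g b = h b) :
    (fun t => if t ≤ b then g t else h t) '' Icc a c = g '' Icc a b ∪ h '' Icc b c := by
  rw [← Icc_union_Icc_eq_Icc hab hbc, image_union, (eqOn_ite_le_Icc_right hgh).image_eq]
  congr 1
  exact image_congr fun t ht => if_pos ht.2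

lemma strictMonoOn_ite_le [Preorder Y] (hab : a ≤ b) (hbc : b ≤ c)
    (hg : StrictMonoOn g (Icc a b)) (hh : StrictMonoOn h (Icc b c)) (hgh : g b = h b) :
    StrictMonoOn (fun t => if t ≤ b then g t else h t) (Icc a c) := by
  rw [← Icc_union_Icc_eq_Icc hab hbc]
  exact (hg.congr fun t ht => (if_pos ht.2).symm).union
    (hh.congr (eqOn_ite_le_Icc_right hgh).symm) (isGreatest_Icc hab) (isLeast_Icc hbc)

variable {X : Type*} [MetricSpace X] [MeasurableSpace X] [BorelSpace X]

/-- The function `f` serves to make the concatenation of the two curves injective. -/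
lemma restrict_union_mem_pathFamily {E F G : Set X} {α β : ℝ → X} {L : ℝ≥0}
    (hα : LipschitzOnWith L α (Icc 0 1)) (hβ : LipschitzOnWith L β (Icc 0 1)) (hαβ : α 1 = β 0)
    {f : X → ℝ} (hfα : StrictMonoOn (f ∘ α) (Icc 0 1)) (hfβ : StrictMonoOn (f ∘ β) (Icc 0 1))
    (hαG : MapsTo α (Icc 0 1) G) (hβG : MapsTo β (Icc 0 1) G) (hE : α 0 ∈ E) (hF : β 1 ∈ F) :
    (μH[1]).restrict (α '' Icc 0 1 ∪ β '' Icc 0 1) ∈ pathFamily E F G := by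
  set l : ℝ → ℝ := fun t => 2 * t + 0
  set r : ℝ → ℝ := fun t => 2 * t + -1
  have hmono (d : ℝ) : StrictMono fun t : ℝ => 2 * t + d := fun s t hst => by
    simp only; linarith
  have hlip (d : ℝ) : LipschitzWith 2 fun t : ℝ => 2 * t + d :=
    LipschitzWith.of_dist_le_mul fun s t => by simp [Real.dist_eq, ← mul_sub, abs_mul]
  have hl : l '' Icc 0 (1 / 2) = Icc 0 1 := by
    rw [image_affine_Icc' two_pos]; norm_num
  have hr : r '' Icc (1 / 2) 1 = Icc 0 1 := by
    rw [image_affine_Icc' two_pos]; norm_num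
  have hml : MapsTo l (Icc 0 (1 / 2)) (Icc 0 1) := mapsTo_iff_image_subset.2 hl.subset
  have hmr : MapsTo r (Icc (1 / 2) 1) (Icc 0 1) := mapsTo_iff_image_subset.2 hr.subset
  have hmid : α (l (1 / 2)) = β (r (1 / 2)) := by norm_num [l, r, hαβ]
  set γ : ℝ → X := fun t => if t ≤ 1 / 2 then α (l t) else β (r t)
  have himage : γ '' Icc 0 1 = α '' Icc 0 1 ∪ β '' Icc 0 1 := by
    calc γ '' Icc 0 1 = (α ∘ l) '' Icc 0 (1 / 2) ∪ (β ∘ r) '' Icc (1 / 2) 1 :=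
          image_ite_le_Icc (by norm_num) (by norm_num) hmid
      _ = α '' Icc 0 1 ∪ β '' Icc 0 1 := by rw [image_comp, image_comp, hl, hr]
  have hγlip : LipschitzOnWith (L * 2) γ (Icc 0 1) :=
    lipschitzOnWith_ite_le (hα.comp (hlip 0).lipschitzOnWith hml)
      (hβ.comp (hlip (-1)).lipschitzOnWith hmr) hmid
  have hγmono : StrictMonoOn (f ∘ γ) (Icc 0 1) := by
    convert strictMonoOn_ite_le (by norm_num) (by norm_num)
      (hfα.comp ((hmono 0).strictMonoOn _) hml) (hfβ.comp ((hmono (-1)).strictMonoOn _) hmr)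
      (congrArg f hmid) using 2 with t
    exact apply_ite f _ _ _
  refine ⟨γ, hγlip.continuousOn, hγmono.injOn.of_comp, ?_, ?_, ?_, ?_, by rw [himage]⟩
  · simpa [BoundedVariationOn] using hγlip.locallyBoundedVariationOn 0 1 (by simp) (by simp)
  · rw [mapsTo_iff_image_subset, himage]
    exact union_subset hαG.image_subset hβG.image_subset
  · simpa [γ, l] using hE
  · norm_num [γ, r]
    exact hF

end Concatenation

variable {X : Type*} [MetricSpace X] [MeasurableSpace X] [BorelSpace X] {V : Type*}
  [NormedAddCommGroup V] [NormedSpace ℝ V]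

lemma setLIntegral_hausdorffMeasure_image_segment_le {f : V → X} (hf : Isometry f) {ρ : X → ℝ≥0∞}
    (hρ : Measurable ρ) (x y : V) :
    ∫⁻ z in f '' segment ℝ x y, ρ z ∂μH[1] ≤
      ENNReal.ofReal (dist x y) * segmentIntegral (ρ ∘ f) x y := by
  have hlip : LipschitzWith (nndist x y) (f ∘ AffineMap.lineMap (k := ℝ) x y) := by
    simpa using hf.lipschitz.comp (lipschitzWith_lineMap x y)
  rw [segment_eq_image_lineMap, ← image_comp, ← edist_dist, edist_nndist]
  exact setLIntegral_hausdorffMeasure_image_le hlip hρ (Icc 0 1)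

namespace IsDouble

variable {K : Set V} {ι : Bool → V → X} {E F G : Set X}

/-- The two segments form a curve from `E` to `F`; it is injective because the functional `φ` is
strictly increasing along it. -/
lemma one_le_segmentIntegral_add_segmentIntegral (H : IsDouble K ι) {ρ : X → ℝ≥0∞}
    (hρ : Admissible (pathFamily E F G) ρ) {G₀ : Set V} (hG₀ : Convex ℝ G₀)
    (hG : ∀ i, MapsTo (ι i) G₀ G) {k e f : V} (hkK : k ∈ K) (hk : k ∈ G₀) (he : e ∈ G₀)
    (hf : f ∈ G₀) (hE : ι false e ∈ E) (hF : ι true f ∈ F) {φ : V →ₗ[ℝ] ℝ} (hek : φ e < φ k)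
    (hkf : φ k < φ f) :
    1 ≤ ENNReal.ofReal (dist k e) * segmentIntegral (ρ ∘ ι false) k e +
      ENNReal.ofReal (dist k f) * segmentIntegral (ρ ∘ ι true) k f := by
  obtain ⟨π, -, hπ⟩ := H.exists_lipschitzWith_leftInverse
  have hlip (i : Bool) (x y : V) :
      LipschitzWith (nndist x y) (ι i ∘ AffineMap.lineMap (k := ℝ) x y) := by
    simpa using (H.isometry i).lipschitz.comp (lipschitzWith_lineMap x y)
  have hmono (i : Bool) {x y : V} (hxy : φ x < φ y) :
      StrictMonoOn ((φ ∘ π) ∘ ι i ∘ AffineMap.lineMap (k := ℝ) x y) (Icc 0 1) := by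
    intro s _ t _ hst
    simp only [Function.comp_apply, hπ, AffineMap.lineMap_apply_module', map_add, map_smul, map_sub,
      smul_eq_mul]
    nlinarith
  have hmaps (i : Bool) {x y : V} (hx : x ∈ G₀) (hy : y ∈ G₀) :
      MapsTo (ι i ∘ AffineMap.lineMap (k := ℝ) x y) (Icc 0 1) G :=
    fun τ hτ => hG i (hG₀.lineMap_mem hx hy hτ)
  have hmem := restrict_union_mem_pathFamily (E := E) (F := F)
    (((hlip false e k).weaken (le_max_left _ (nndist k f))).lipschitzOnWith)
    (((hlip true k f).weaken (le_max_right _ _)).lipschitzOnWith)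
    (by simpa using H.glue k hkK false true) (hmono false hek) (hmono true hkf)
    (hmaps false he hk) (hmaps true hk hf) (by simpa using hE) (by simpa using hF)
  rw [image_comp, image_comp, ← segment_eq_image_lineMap, ← segment_eq_image_lineMap,
    segment_symm] at hmem
  exact (hρ.2 _ hmem).trans ((lintegral_union_le _ _ _).trans (add_le_add
    (setLIntegral_hausdorffMeasure_image_segment_le (H.isometry _) hρ.1 _ _)
    (setLIntegral_hausdorffMeasure_image_segment_le (H.isometry _) hρ.1 _ _)))

lemma min_measure_le_mul_setLIntegral_segmentIntegral_add [MeasurableSpace V] {μ : Measure V}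
    (H : IsDouble K ι) {ρ : X → ℝ≥0∞} (hρ : Admissible (pathFamily E F G) ρ) {G₀ E₀ F₀ : Set V}
    (hG₀ : Convex ℝ G₀) {δ : ℝ} (hδ : ∀ x ∈ G₀, ∀ y ∈ G₀, dist x y ≤ δ)
    (hG : ∀ i, MapsTo (ι i) G₀ G) (hE₀m : MeasurableSet E₀) (hF₀m : MeasurableSet F₀)
    (hE₀ : E₀ ⊆ G₀) (hF₀ : F₀ ⊆ G₀) (hE : MapsTo (ι false) E₀ E) (hF : MapsTo (ι true) F₀ F)
    {φ : V →ₗ[ℝ] ℝ} {k : V} (hkK : k ∈ K) (hk : k ∈ G₀) (hkE : ∀ e ∈ E₀, φ e < φ k)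
    (hkF : ∀ f ∈ F₀, φ k < φ f) :
    min (μ E₀) (μ F₀) ≤ ENNReal.ofReal δ * (∫⁻ x in G₀, segmentIntegral (ρ ∘ ι false) k x ∂μ +
      ∫⁻ x in G₀, segmentIntegral (ρ ∘ ι true) k x ∂μ) := by
  have hsum : ∀ e ∈ E₀, ∀ f ∈ F₀, 1 ≤ ENNReal.ofReal δ * segmentIntegral (ρ ∘ ι false) k e +
      ENNReal.ofReal δ * segmentIntegral (ρ ∘ ι true) k f := fun e he f hf => by
    refine (H.one_le_segmentIntegral_add_segmentIntegral hρ hG₀ hG hkK hk (hE₀ he) (hF₀ hf)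
      (hE he) (hF hf) (hkE e he) (hkF f hf)).trans ?_
    gcongr
    exacts [hδ k hk e (hE₀ he), hδ k hk f (hF₀ hf)]
  have h := mul_min_le_setLIntegral_add_setLIntegral (μ := μ) (ν := μ) hE₀m hF₀m hsum
  rw [one_mul, lintegral_const_mul' _ _ ENNReal.ofReal_ne_top,
    lintegral_const_mul' _ _ ENNReal.ofReal_ne_top, ← mul_add] at h
  refine h.trans ?_
  gcongr

variable [FiniteDimensional ℝ V] [MeasurableSpace V] [BorelSpace V] {μ ν : Measure V}
  [μ.IsAddHaarMeasure] [IsProbabilityMeasure ν] {δ q t : ℝ} {C : ℝ≥0}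

lemma lintegral_setLIntegral_segmentIntegral_comp_le (H : IsDouble K ι) (hF : IsFrostman ν δ t C)
    {B : Set V} (hB : Convex ℝ B) (hBm : MeasurableSet B) (hδ : ∀ x ∈ B, ∀ y ∈ B, dist x y ≤ δ)
    (hν : ∀ᵐ k ∂ν, k ∈ B) (hq : 1 ≤ q) {ρ : X → ℝ≥0∞} (hρ : Measurable ρ) (i : Bool) :
    ∫⁻ k, ∫⁻ x in B, segmentIntegral (ρ ∘ ι i) k x ∂μ ∂ν ≤
      segmentConst (Module.finrank ℝ V) q t C *
        ((∫⁻ x, ρ x ^ q ∂doubleMeasure μ ι) ^ (1 / q) * μ B ^ (1 - 1 / q)) := by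
  refine (hF.lintegral_setLIntegral_segmentIntegral_le hB hBm hδ hν hq
    (hρ.comp (H.isometry i).continuous.measurable)).trans ?_
  gcongr
  calc ∫⁻ v in B, ρ (ι i v) ^ q ∂μ ≤ ∫⁻ v, ρ (ι i v) ^ q ∂μ := setLIntegral_le_lintegral _ _
    _ ≤ ∑ j, ∫⁻ v, ρ (ι j v) ^ q ∂μ :=
        Finset.single_le_sum (f := fun j => ∫⁻ v, ρ (ι j v) ^ q ∂μ) (fun _ _ => zero_le)
          (Finset.mem_univ i)
    _ = ∫⁻ x, ρ x ^ q ∂doubleMeasure μ ι := by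
        simpa using (H.setLIntegral_doubleMeasure μ univ fun x => ρ x ^ q).symm

/-- Any two points of `E₀` and `F₀` are joined through `ν`-almost every point of `K`. -/
theorem modulus_pathFamily_pos (H : IsDouble K ι) (hq : 1 ≤ q) (ht : Module.finrank ℝ V - q < t)
    (hF : IsFrostman ν δ t C) {G₀ E₀ F₀ : Set V} (hG₀ : Convex ℝ G₀) (hG₀m : MeasurableSet G₀)
    (hδ : ∀ x ∈ G₀, ∀ y ∈ G₀, dist x y ≤ δ) (hG : ∀ i, MapsTo (ι i) G₀ G)
    (hE₀m : MeasurableSet E₀) (hF₀m : MeasurableSet F₀) (hE₀ : E₀ ⊆ G₀) (hF₀ : F₀ ⊆ G₀)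
    (hμE : μ E₀ ≠ 0) (hμF : μ F₀ ≠ 0) (hE : MapsTo (ι false) E₀ E) (hFF : MapsTo (ι true) F₀ F)
    {φ : V →ₗ[ℝ] ℝ} (hν : ∀ᵐ k ∂ν, k ∈ K ∧ k ∈ G₀ ∧ (∀ e ∈ E₀, φ e < φ k) ∧ ∀ f ∈ F₀, φ k < φ f) :
    0 < modulus (doubleMeasure μ ι) q (pathFamily E F G) := by
  have hq0 : 0 < q := one_pos.trans_le hq
  set D := segmentConst (Module.finrank ℝ V) q t C * μ G₀ ^ (1 - 1 / q)
  set M := ENNReal.ofReal δ * (2 * D)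
  set m := min (μ E₀) (μ F₀)
  have hM : M ≠ ⊤ := by
    have hG₀top : μ G₀ ≠ ⊤ := (isBounded_iff.2 ⟨δ, fun x hx y hy => hδ x hx y hy⟩).measure_lt_top.ne
    have h1q : 0 ≤ 1 - 1 / q := sub_nonneg.2 ((div_le_one hq0).2 hq)
    exact ENNReal.mul_ne_top ENNReal.ofReal_ne_top (ENNReal.mul_ne_top ENNReal.ofNat_ne_top
      (ENNReal.mul_ne_top (segmentConst_ne_top hq0 ht)
        (ENNReal.rpow_ne_top_of_nonneg h1q hG₀top)))
  have hm : m ≠ 0 := (lt_min (pos_iff_ne_zero.2 hμE) (pos_iff_ne_zero.2 hμF)).ne'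
  refine (ENNReal.rpow_pos_of_nonneg (ENNReal.div_pos hm hM) hq0.le).trans_le
    (le_iInf₂ fun ρ hρ => ?_)
  have hseg (i : Bool) := H.lintegral_setLIntegral_segmentIntegral_comp_le (μ := μ) hF hG₀ hG₀m hδ
    (hν.mono fun k hk => hk.2.1) hq hρ.1 i
  set I := ∫⁻ x, ρ x ^ q ∂doubleMeasure μ ι
  set J : Bool → V → ℝ≥0∞ := fun i k => ∫⁻ x in G₀, segmentIntegral (ρ ∘ ι i) k x ∂μ
  have hJ : ∀ᵐ k ∂ν, m ≤ ENNReal.ofReal δ * (J false k + J true k) := by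
    filter_upwards [hν] with k ⟨hkK, hkG, hkE, hkF⟩
    exact H.min_measure_le_mul_setLIntegral_segmentIntegral_add hρ hG₀ hδ hG hE₀m hF₀m hE₀ hF₀ hE
      hFF hkK hkG hkE hkF
  have hJm : Measurable (J false) :=
    (measurable_segmentIntegral
      (hρ.1.comp (H.isometry false).continuous.measurable)).lintegral_prod_right'
  suffices h : m ≤ I ^ (1 / q) * M by
    have := ENNReal.rpow_le_rpow (ENNReal.div_le_of_le_mul h) hq0.le
    rwa [← ENNReal.rpow_mul, one_div_mul_cancel hq0.ne', ENNReal.rpow_one] at this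
  calc m = ∫⁻ _, m ∂ν := by simp
    _ ≤ ∫⁻ k, ENNReal.ofReal δ * (J false k + J true k) ∂ν := lintegral_mono_ae hJ
    _ = ENNReal.ofReal δ * (∫⁻ k, J false k ∂ν + ∫⁻ k, J true k ∂ν) := by
        rw [lintegral_const_mul' _ _ ENNReal.ofReal_ne_top, lintegral_add_left hJm]
    _ ≤ I ^ (1 / q) * M := by
        refine (mul_le_mul_right (add_le_add (hseg false) (hseg true)) _).trans_eq ?_
        simp only [M, D]
        ring

end IsDouble

end PathModulus

section OnePoincare

variable {V X : Type*} [MetricSpace X] {ι : Bool → V → X} {r : ℝ}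

/-- The function on a double that increases from `0` on the copy `ι false` of `V` to `1` on the
part of the copy `ι true` at distance at least `r` from the gluing set. -/
noncomputable def transition (ι : Bool → V → X) (r : ℝ) (x : X) : ℝ :=
  min 1 (infDist x (range (ι false)) / r)

/-- The upper gradient of `transition ι r`. -/
noncomputable def transitionGradient (ι : Bool → V → X) (r : ℝ) : X → ℝ≥0∞ :=
  ((infDist · (range (ι false))) ⁻¹' Ioo 0 r).indicator fun _ => ENNReal.ofReal r⁻¹

lemma continuous_transition : Continuous (transition ι r) :=
  continuous_const.min ((continuous_infDist_pt _).div_const r)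

lemma isUpperGradientOn_transition (hr : 0 < r) :
    IsUpperGradientOn (transition ι r) (transitionGradient ι r) univ :=
  isUpperGradientOn_min_one_div (lipschitz_infDist_pt _) (fun _ => infDist_nonneg) hr

lemma measurable_transitionGradient [MeasurableSpace X] [OpensMeasurableSpace X] :
    Measurable (transitionGradient ι r) :=
  measurable_const.indicator ((continuous_infDist_pt _).measurable measurableSet_Ioo)

lemma transition_false (v : V) : transition ι r (ι false v) = 0 := by
  simp [transition, infDist_zero_of_mem (mem_range_self v)]

lemma transitionGradient_false (v : V) : transitionGradient ι r (ι false v) = 0 :=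
  indicator_of_notMem (by simp [infDist_zero_of_mem (mem_range_self v)]) _

lemma exists_mul_sq_lt_and_mul_ofReal_div_lt {c m : ℝ} {D b e : ℝ≥0∞} (hm : 0 < m) (hD : D ≠ ⊤)
    (hb : b ≠ 0) (he : 0 < e) :
    ∃ η, 0 < η ∧ c * η ^ 2 < m ∧ D * (ENNReal.ofReal η / b) < e := by
  have h₁ : Tendsto (fun η : ℝ => c * η ^ 2) (𝓝 0) (𝓝 0) :=
    Continuous.tendsto' (by fun_prop) _ _ (by simp)
  have h₂ : Tendsto (fun η : ℝ => D * (ENNReal.ofReal η / b)) (𝓝 0) (𝓝 0) := by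
    have : Tendsto ENNReal.ofReal (𝓝 0) (𝓝 0) :=
      ENNReal.continuous_ofReal.tendsto' _ _ ENNReal.ofReal_zero
    simpa using ENNReal.Tendsto.const_mul (ENNReal.Tendsto.div_const this (.inr hb)) (.inr hD)
  have h : ∀ᶠ η in 𝓝[>] (0 : ℝ), c * η ^ 2 < m ∧ D * (ENNReal.ofReal η / b) < e :=
    nhdsWithin_le_nhds ((h₁.eventually_lt_const hm).and (h₂.eventually_lt_const he))
  obtain ⟨η, ⟨hη₁, hη₂⟩, hη : 0 < η⟩ := (h.and self_mem_nhdsWithin).exists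
  exact ⟨η, hη, hη₁, hη₂⟩

namespace IsDouble

variable [MetricSpace V] {K : Set V}

lemma mem_thickening_of_infDist_lt (H : IsDouble K ι) {v : V}
    (h : infDist (ι true v) (range (ι false)) < r) : v ∈ thickening r K := by
  obtain ⟨_, ⟨w, rfl⟩, hw⟩ := (infDist_lt_iff (range_nonempty_iff_nonempty.2 ⟨v⟩)).1 h
  obtain ⟨k, hk, hd⟩ := H.exists_dist_eq true false (by decide) v w
  exact mem_thickening_iff.2 ⟨k, hk, by linarith [dist_nonneg (x := k) (y := w)]⟩

lemma transition_true (H : IsDouble K ι) (hr : 0 < r) {v : V} (hv : v ∉ thickening r K) :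
    transition ι r (ι true v) = 1 :=
  min_eq_left ((one_le_div hr).2 (not_lt.1 fun h => hv (H.mem_thickening_of_infDist_lt h)))

lemma transitionGradient_true_le (H : IsDouble K ι) (v : V) :
    transitionGradient ι r (ι true v) ≤
      (thickening r K).indicator (fun _ => ENNReal.ofReal r⁻¹) v := by
  rw [transitionGradient, ← indicator_comp_right (g := fun _ => ENNReal.ofReal r⁻¹) (ι true)]
  exact indicator_le_indicator_of_subset (fun w hw => H.mem_thickening_of_infDist_lt hw.2)
    (fun _ => zero_le) v

variable [MeasurableSpace V] [BorelSpace V] [MeasurableSpace X] [BorelSpace X] {k : V} {R : ℝ}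

lemma setLIntegral_transitionGradient_le [CompleteSpace V] (H : IsDouble K ι) (μ : Measure V)
    (hk : k ∈ K) (i : Bool) :
    ∫⁻ x in ball (ι i k) R, transitionGradient ι r x ∂doubleMeasure μ ι ≤
      ENNReal.ofReal r⁻¹ * μ (ball k R ∩ thickening r K) := by
  calc ∫⁻ x in ball (ι i k) R, transitionGradient ι r x ∂doubleMeasure μ ι
      = ∫⁻ v in ball k R, transitionGradient ι r (ι true v) ∂μ := by
        simp [H.setLIntegral_doubleMeasure, H.preimage_ball_of_mem hk, transitionGradient_false]
    _ ≤ ∫⁻ v in ball k R, (thickening r K).indicator (fun _ => ENNReal.ofReal r⁻¹) v ∂μ :=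
        lintegral_mono H.transitionGradient_true_le
    _ = ENNReal.ofReal r⁻¹ * μ (ball k R ∩ thickening r K) := by
        rw [lintegral_indicator isOpen_thickening.measurableSet, setLIntegral_const,
          Measure.restrict_apply isOpen_thickening.measurableSet, inter_comm]

variable [ProperSpace V] {μ : Measure V} [IsLocallyFiniteMeasure μ] [μ.IsOpenPosMeasure]

lemma quarter_le_average_abs_transition_sub (H : IsDouble K ι) (hk : k ∈ K) (hr : 0 < r)
    (hR : 0 < R) (hvol : 2 * μ.real (ball k R ∩ thickening r K) ≤ μ.real (ball k R)) (m : ℝ) :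
    1 / 4 ≤ ⨍ x in ball (ι false k) R, |transition ι r x - m| ∂doubleMeasure μ ι := by
  have := H.properSpace
  have := H.isLocallyFiniteMeasure_doubleMeasure μ
  have hsub (i : Bool) : ι i '' ball k R ⊆ ball (ι false k) R := by
    rw [image_subset_iff, H.preimage_ball_of_mem hk]
  have hball : (doubleMeasure μ ι).real (ball (ι false k) R) = 2 * μ.real (ball k R) := by
    simp [measureReal_def, H.doubleMeasure_apply, H.preimage_ball_of_mem hk]
  have himage (i : Bool) {A : Set V} (hA : A ⊆ ball k R) :
      μ.real A ≤ (doubleMeasure μ ι).real (ι i '' A) :=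
    ENNReal.toReal_mono ((measure_mono ((image_mono hA).trans (hsub i))).trans_lt
      measure_ball_lt_top).ne (H.measure_le_doubleMeasure_image μ i A)
  have hdiff := measureReal_inter_add_sdiff (μ := μ) (s := ball k R)
    (isOpen_thickening (δ := r) (E := K)).measurableSet measure_ball_lt_top.ne
  refine le_average_abs_sub (A₀ := ι false '' ball k R)
    (A₁ := ι true '' (ball k R \ thickening r K))
    ((H.measurableEmbedding false).measurableSet_image' measurableSet_ball)
    ((H.measurableEmbedding true).measurableSet_image'
      (measurableSet_ball.diff isOpen_thickening.measurableSet)) (hsub false)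
    ((image_mono sdiff_subset).trans (hsub true))
    ((measure_ball_pos μ k hR).trans_le (H.measure_ball_le_doubleMeasure μ false k R)).ne'
    measure_ball_lt_top.ne ?_ ?_ ?_ ?_ ?_ m
  · exact (continuous_transition.locallyIntegrable.integrableOn_isCompact
      (isCompact_closedBall _ R)).mono_set ball_subset_closedBall
  · rintro _ ⟨v, -, rfl⟩
    exact transition_false v
  · rintro _ ⟨v, hv, rfl⟩
    exact H.transition_true hr hv.2
  · refine le_trans ?_ (himage false Subset.rfl)
    linarith [measureReal_nonneg (μ := μ) (s := ball k R)]
  · refine le_trans ?_ (himage true sdiff_subset)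
    linarith

lemma quarter_le_of_weakPoincare_one (H : IsDouble K ι) (hk : k ∈ K) (hr : 0 < r)
    (hR : 0 < R) (hvol : 2 * μ.real (ball k R ∩ thickening r K) ≤ μ.real (ball k R)) {CP lP : ℝ}
    (hW : WeakPoincare (doubleMeasure μ ι) 1 CP lP) :
    ENNReal.ofReal (1 / 4) ≤ ENNReal.ofReal (CP * diam (ball (ι false k) R)) *
      (ENNReal.ofReal r⁻¹ * μ (ball k (lP * R) ∩ thickening r K) /
        doubleMeasure μ ι (ball (ι false k) (lP * R))) := by
  have := H.properSpace
  have := H.isLocallyFiniteMeasure_doubleMeasure μ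
  have h := hW _ (continuous_transition (ι := ι) (r := r)).locallyIntegrable _
    measurable_transitionGradient (isUpperGradientOn_transition hr) (ι false k) R hR
  simp only [ENNReal.rpow_one, div_one, setLAverage_eq] at h
  refine (ENNReal.ofReal_le_ofReal
    (H.quarter_le_average_abs_transition_sub hk hr hR hvol _)).trans (h.trans ?_)
  gcongr
  exact H.setLIntegral_transitionGradient_le μ hk false

theorem not_weakPoincare_one_doubleMeasure (H : IsDouble K ι) (hk : k ∈ K)
    (hvol : ∀ η, 0 < η → ∃ r, 0 < r ∧ r ≤ η ∧
      μ (ball k 1 ∩ thickening r K) ≤ ENNReal.ofReal (η * r)) {CP lP : ℝ} (hlP : 1 ≤ lP) :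
    ¬ WeakPoincare (doubleMeasure μ ι) 1 CP lP := by
  intro hW
  have hlP0 : 0 < lP := one_pos.trans_le hlP
  set R := lP⁻¹
  have hR : 0 < R := inv_pos.2 hlP0
  set D := ENNReal.ofReal (CP * diam (ball (ι false k) R))
  set b := doubleMeasure μ ι (ball (ι false k) 1)
  have hb : b ≠ 0 :=
    ((measure_ball_pos μ k one_pos).trans_le (H.measure_ball_le_doubleMeasure μ false k 1)).ne'
  have hpos : 0 < μ.real (ball k R) :=
    ENNReal.toReal_pos (measure_ball_pos μ k hR).ne' measure_ball_lt_top.ne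
  obtain ⟨η, hη, hη₁, hη₂⟩ := exists_mul_sq_lt_and_mul_ofReal_div_lt (c := 2) (D := D) hpos
    ENNReal.ofReal_ne_top hb (ENNReal.ofReal_pos.2 (by norm_num : (0 : ℝ) < 1 / 4))
  obtain ⟨r, hr, hrη, hN⟩ := hvol η hη
  have hhalf : 2 * μ.real (ball k R ∩ thickening r K) ≤ μ.real (ball k R) := by
    have hle : μ.real (ball k R ∩ thickening r K) ≤ η * r :=
      ENNReal.toReal_le_of_le_ofReal (mul_nonneg hη.le hr.le) <|
        (measure_mono (inter_subset_inter_left _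
          (ball_subset_ball (inv_le_one_of_one_le₀ hlP)))).trans hN
    nlinarith
  have hη₃ : ENNReal.ofReal r⁻¹ * μ (ball k 1 ∩ thickening r K) ≤ ENNReal.ofReal η := by
    refine (mul_le_mul_right hN _).trans_eq ?_
    rw [← ENNReal.ofReal_mul (inv_nonneg.2 hr.le), mul_comm, mul_inv_cancel_right₀ hr.ne']
  have h := H.quarter_le_of_weakPoincare_one hk hr hR hhalf hW
  rw [mul_inv_cancel₀ hlP0.ne'] at h
  exact hη₂.not_ge (h.trans (by gcongr))

end IsDouble

end OnePoincare

section Condenser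

lemma isNondegContinuum_image_closedBall {V X : Type*} [NormedAddCommGroup V] [NormedSpace ℝ V]
    [ProperSpace V] [Nontrivial V] [MetricSpace X] {f : V → X} (hf : Isometry f) (c : V) {r : ℝ}
    (hr : 0 < r) : IsNondegContinuum (f '' closedBall c r) := by
  have hconn : IsConnected (closedBall c r) :=
    ((convex_closedBall c r).isPathConnected ⟨c, mem_closedBall_self hr.le⟩).isConnected
  obtain ⟨w, hw⟩ := exists_norm_eq V hr.le
  have hw₀ : w ≠ 0 := norm_ne_zero_iff.1 (hw ▸ hr.ne')
  have hnontriv : (closedBall c r).Nontrivial :=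
    ⟨c + w, by simp [hw], c, mem_closedBall_self hr.le, by simpa using hw₀⟩
  exact ⟨(isCompact_closedBall c r).image hf.continuous,
    hconn.image f hf.continuous.continuousOn, hnontriv.image hf.injective⟩

namespace IsDouble

variable {V X : Type*} [NormedAddCommGroup V] [NormedSpace ℝ V] [ProperSpace V] [MetricSpace X]
  {K : Set V} {ι : Bool → V → X} {k : V} {r : ℝ}

lemma isDomainWithCompactClosure_ball (H : IsDouble K ι) (hk : k ∈ K) (hr : 0 < r) :
    IsDomainWithCompactClosure (ball (ι false k) r) := by
  have := H.properSpace
  have hunion : ball (ι false k) r = ι false '' ball k r ∪ ι true '' ball k r := by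
    refine Subset.antisymm (fun x hx => ?_) (union_subset ?_ ?_)
    · obtain ⟨i, v, rfl⟩ := H.exists_eq x
      have hv := mem_image_of_mem (ι i) ((H.preimage_ball_of_mem hk false i r).subset hx)
      cases i
      exacts [Or.inl hv, Or.inr hv]
    all_goals rw [image_subset_iff, H.preimage_ball_of_mem hk]
  have hconn (i : Bool) : IsConnected (ι i '' ball k r) :=
    ((convex_ball k r).isPathConnected ⟨k, mem_ball_self hr⟩).isConnected.image _
      (H.isometry i).continuous.continuousOn
  refine ⟨isOpen_ball, ?_, isBounded_ball.isCompact_closure⟩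
  rw [hunion]
  exact (hconn false).union ⟨ι false k, mem_image_of_mem _ (mem_ball_self hr),
    k, mem_ball_self hr, H.glue k hk true false⟩ (hconn true)

/-- The part of `K` in the ball separates the two copies, and carries no `μH[d]`-mass. -/
lemma not_exists_admissible_surfaceFamilyH_ball [MeasurableSpace V] [BorelSpace V]
    [MeasurableSpace X] [BorelSpace X] (H : IsDouble K ι) (hK : IsClosed K) (hk : k ∈ K)
    (hr : 0 < r) {d : ℝ} (hd : 0 ≤ d) (h0 : μH[d] (K ∩ closedBall k r) = 0) {E F : Set V}
    (hE : IsConnected E) (hF : IsConnected F) (hEK : E ⊆ ball k r \ K) (hFK : F ⊆ ball k r \ K) :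
    ¬ ∃ ρ : X → ℝ≥0∞, Admissible
      (surfaceFamilyH d (ι false '' E) (ι true '' F) (ball (ι false k) r)) ρ := by
  have hball (i : Bool) (v : V) : ι i v ∈ ball (ι false k) r ↔ v ∈ ball k r :=
    Set.ext_iff.1 (H.preimage_ball_of_mem hk false i r) v
  have hcont (i : Bool) : Continuous (ι i) := (H.isometry i).continuous
  set S := ι false '' (K ∩ closedBall k r)
  have hsub {A : Set V} (hA : A ⊆ ball k r \ K) (i : Bool) :
      ι i '' A ⊆ ball (ι false k) r \ S := by
    rintro _ ⟨v, hv, rfl⟩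
    refine ⟨(hball i v).2 (hA hv).1, ?_⟩
    rintro ⟨w, hw, hwv⟩
    exact (hA hv).2 (H.eq_of_eq hwv ▸ hw.1)
  refine not_exists_admissible_surfaceFamilyH (S := S)
    (((isCompact_closedBall k r).inter_left hK).image (hcont false)) ?_ ?_ ?_
  · refine (image_mono (inter_subset_right.trans_eq (closure_ball k hr.ne').symm)).trans
      ((image_closure_subset_closure_image (hcont false)).trans (closure_mono ?_))
    exact image_subset_iff.2 fun v => (hball false v).2
  · refine H.separatesIn (fun v hv i hvG => ?_) (hE.image _ (hcont false).continuousOn)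
      (hF.image _ (hcont true).continuousOn) (hsub hEK false) (hsub hFK true)
      (image_subset_range _ _) (image_subset_range _ _)
    exact ⟨v, ⟨hv, ball_subset_closedBall ((hball i v).1 hvG)⟩, H.glue v hv false i⟩
  · refine measure_mono_null inter_subset_left ?_
    rw [(H.isometry false).hausdorffMeasure_image (Or.inl hd), h0]

end IsDouble

/-- The plates `plate (-1 / 2)` and `plate (1 / 2)`, placed in different copies of `ℝ³`, form the
condenser. They avoid the glued set, which lies in the octant of nonnegative coordinates. -/
noncomputable def plate (s : ℝ) : Set (Fin 3 → ℝ) :=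
  closedBall ![s, -1 / 2, 0] (1 / 8)

variable {s : ℝ} {v : Fin 3 → ℝ}

lemma abs_sub_le_of_mem_plate (hv : v ∈ plate s) : |v 0 - s| ≤ 1 / 8 :=
  (dist_le_pi_dist v _ 0).trans hv

lemma neg_of_mem_plate (hv : v ∈ plate s) : v 1 < 0 := by
  have h : |v 1 - -1 / 2| ≤ 1 / 8 := (dist_le_pi_dist v _ 1).trans hv
  linarith [(abs_le.1 h).2]

lemma plate_subset_ball (hs : |s| ≤ 1 / 2) : plate s ⊆ ball 0 1 := by
  refine closedBall_subset_ball' ?_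
  have h : dist ![s, -1 / 2, 0] 0 ≤ 1 / 2 := by
    rw [dist_zero_right, pi_norm_le_iff_of_nonneg (by norm_num)]
    simpa [Fin.forall_fin_succ, abs_div] using hs
  linarith

lemma isConnected_plate (s : ℝ) : IsConnected (plate s) :=
  ((convex_closedBall _ _).isPathConnected
    ⟨_, mem_closedBall_self (by norm_num)⟩).isConnected

lemma plate_subset_ball_diff (hs : |s| ≤ 1 / 2) {K : Set (Fin 3 → ℝ)} (hK : ∀ k ∈ K, 0 ≤ k) :
    plate s ⊆ ball 0 1 \ K := fun _ hv =>
  ⟨plate_subset_ball hs hv, fun hvK => (neg_of_mem_plate hv).not_ge (hK _ hvK 1)⟩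

namespace IsDouble

variable {X : Type*} [MetricSpace X] {K : Set (Fin 3 → ℝ)} {ι : Bool → (Fin 3 → ℝ) → X}

lemma image_plate_subset_ball (H : IsDouble K ι) (h0 : 0 ∈ K) (i : Bool) (hs : |s| ≤ 1 / 2) :
    ι i '' plate s ⊆ ball (ι false 0) 1 := by
  rw [image_subset_iff, H.preimage_ball_of_mem h0]
  exact plate_subset_ball hs

lemma isNondegContinuum_image_plate (H : IsDouble K ι) (i : Bool) (s : ℝ) :
    IsNondegContinuum (ι i '' plate s) :=
  isNondegContinuum_image_closedBall (H.isometry i) _ (by norm_num)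

lemma disjoint_image_plate (H : IsDouble K ι) :
    Disjoint (ι false '' plate (-1 / 2)) (ι true '' plate (1 / 2)) := by
  rw [Set.disjoint_left]
  rintro _ ⟨v, hv, rfl⟩ ⟨w, hw, h⟩
  rw [H.eq_of_eq h] at hw
  linarith [(abs_le.1 (abs_sub_le_of_mem_plate hv)).2, (abs_le.1 (abs_sub_le_of_mem_plate hw)).1]

variable [MeasurableSpace X] [BorelSpace X] {q : ℝ}

lemma not_exists_admissible_surfaceFamilyH_plate (H : IsDouble K ι) (hK : IsClosed K)
    (h0 : 0 ∈ K) (hpos : ∀ k ∈ K, 0 ≤ k) {d : ℝ} (hd : 0 ≤ d)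
    (hnull : μH[d] (K ∩ closedBall 0 1) = 0) :
    ¬ ∃ ρ : X → ℝ≥0∞, Admissible (surfaceFamilyH d (ι false '' plate (-1 / 2))
      (ι true '' plate (1 / 2)) (ball (ι false 0) 1)) ρ :=
  H.not_exists_admissible_surfaceFamilyH_ball hK h0 one_pos hd hnull (isConnected_plate _)
    (isConnected_plate _) (plate_subset_ball_diff (by norm_num [abs_div]) hpos)
    (plate_subset_ball_diff (by norm_num) hpos)

lemma modulus_pathFamily_plate_pos (H : IsDouble K ι) (h0 : 0 ∈ K) {t : ℝ} {C : ℝ≥0}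
    (hq : 1 ≤ q) (ht : 3 - q < t) (hν : CarriesFrostman K 0 (1 / 4) t C) :
    0 < modulus (doubleMeasure volume ι) q
      (pathFamily (ι false '' plate (-1 / 2)) (ι true '' plate (1 / 2)) (ball (ι false 0) 1)) := by
  obtain ⟨ν, _, hνK, hF⟩ := hν
  have hvol (s : ℝ) : volume (plate s) ≠ 0 := (measure_closedBall_pos _ _ (by norm_num)).ne'
  refine H.modulus_pathFamily_pos (G₀ := ball 0 1) (δ := 2) hq (by simpa using ht)
    (hF.of_le_mul (A := 8) (by norm_num) (by norm_num)) (convex_ball 0 1) measurableSet_ball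
    (fun x hx y hy => ?_) (fun i v hv => (H.preimage_ball_of_mem h0 false i 1).ge hv)
    measurableSet_closedBall measurableSet_closedBall (plate_subset_ball (by norm_num [abs_div]))
    (plate_subset_ball (by norm_num [abs_div])) (hvol _) (hvol _) (mapsTo_image _ _)
    (mapsTo_image _ _) (φ := LinearMap.proj 0) ?_
  · linarith [dist_triangle_right x y 0, mem_ball.1 hx, mem_ball.1 hy]
  · filter_upwards [hνK] with k ⟨hkK, hk⟩
    have hk₀ : |k 0 - 0| ≤ 1 / 4 := (dist_le_pi_dist k 0 0).trans hk
    rw [sub_zero, abs_le] at hk₀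
    refine ⟨hkK, closedBall_subset_ball (by norm_num) hk, fun e he => ?_, fun f hf => ?_⟩
    · simp only [LinearMap.proj_apply]
      linarith [(abs_le.1 (abs_sub_le_of_mem_plate he)).2]
    · simp only [LinearMap.proj_apply]
      linarith [(abs_le.1 (abs_sub_le_of_mem_plate hf)).1]

lemma modulus_pathFamily_plate_ne_top (H : IsDouble K ι) (hq : 0 < q) :
    modulus (doubleMeasure volume ι) q (pathFamily (ι false '' plate (-1 / 2))
      (ι true '' plate (1 / 2)) (ball (ι false 0) 1)) ≠ ⊤ := by
  obtain ⟨π, hπ, hπι⟩ := H.exists_lipschitzWith_leftInverse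
  have hf : LipschitzWith 1 fun x => π x 0 := by
    simpa [Function.comp_def] using (LipschitzWith.eval (0 : Fin 3)).comp hπ
  refine modulus_pathFamily_ne_top (a := -3 / 8) (b := 3 / 8) hf ?_ ?_ (by norm_num)
    measurableSet_ball ?_ hq
  · rintro _ ⟨v, hv, rfl⟩
    rw [hπι]
    linarith [(abs_le.1 (abs_sub_le_of_mem_plate hv)).2]
  · rintro _ ⟨v, hv, rfl⟩
    rw [hπι]
    linarith [(abs_le.1 (abs_sub_le_of_mem_plate hv)).1]
  · exact ne_top_of_le_ne_top (ENNReal.mul_ne_top ENNReal.ofNat_ne_top measure_ball_lt_top.ne)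
      (H.doubleMeasure_ball_le volume false 0 1)

end IsDouble

end Condenser

/-- Counterexample: the duality fails without the 1-Poincaré inequality. For every
`ε ∈ (0,1)` there is a complete geodesic Ahlfors 3-regular space supporting a weak
`(1+ε)`-Poincaré inequality in which the separating surface family of some condenser
admits no admissible function, while the path modulus is nondegenerate. -/
theorem duality_fails_without_one_poincare :
    ∀ ε : ℝ, 0 < ε → ε < 1 →
    ∃ (X : Type) (_i1 : MetricSpace X) (_i2 : MeasurableSpace X) (_i3 : BorelSpace X)
      (μ : Measure X) (a A CP lP : ℝ),
      CompleteSpace X ∧ IsGeodesicSpace X ∧ BorelRegular μ ∧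
      AhlforsRegular μ 3 a A ∧ 1 ≤ CP ∧ 1 ≤ lP ∧ WeakPoincare μ (1 + ε) CP lP ∧
      ∃ G E F : Set X,
        IsDomainWithCompactClosure G ∧ IsNondegContinuum E ∧ IsNondegContinuum F ∧
        E ⊆ G ∧ F ⊆ G ∧ Disjoint E F ∧
        0 < modulus μ 3 (pathFamily E F G) ∧ modulus μ 3 (pathFamily E F G) ≠ ⊤ ∧
        (¬ ∃ ρ : X → ℝ≥0∞, Admissible (surfaceFamilyH 2 E F G) ρ) ∧
        modulus μ (3 / 2) (surfaceFamilyH 2 E F G) = ⊤ ∧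
        (∀ C : ℝ, ¬ (modulus μ 3 (pathFamily E F G) ^ ((1 : ℝ) / 3) *
            modulus μ (3 / 2) (surfaceFamilyH 2 E F G) ^ ((2 : ℝ) / 3) ≤
            ENNReal.ofReal C)) ∧
        (∀ CP' lP' : ℝ, 1 ≤ CP' → 1 ≤ lP' → ¬ WeakPoincare μ 1 CP' lP') := by
  intro ε hε0 hε1
  obtain ⟨K, C, hK, h0, hpos, hν, hnull, hvol⟩ := exists_isClosed_carriesFrostman_null (ι := Fin 3)
    (t := 2 - ε / 2) (s := 2) (by linarith) (by linarith) (by norm_num)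
  obtain ⟨X, iX, ι, H⟩ := exists_isDouble hK ⟨0, h0⟩
  let _ : MeasurableSpace X := borel X
  have : BorelSpace X := ⟨rfl⟩
  have := H.properSpace
  have hreg := H.ahlforsRegular_doubleMeasure volume
  rw [Module.finrank_fin_fun, Nat.cast_ofNat] at hreg
  obtain ⟨CP, hCP, hP⟩ := H.exists_weakPoincare_doubleMeasure (μ := volume) (p := 1 + ε) hν
    (by linarith) (by norm_num; linarith)
  have hmod := H.modulus_pathFamily_plate_pos (q := 3) h0 (by norm_num) (by linarith)
    (hν 0 h0 (1 / 4) (by norm_num))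
  have hno := H.not_exists_admissible_surfaceFamilyH_plate hK h0 hpos zero_le_two hnull
  have htop := modulus_eq_top_of_not_exists_admissible hno (doubleMeasure volume ι) (3 / 2)
  refine ⟨X, iX, borel X, ⟨rfl⟩, _, _, _, CP, 3, inferInstance,
    H.isGeodesicSpace isGeodesicSpace_of_normedSpace, borelRegular _, hreg, hCP, by norm_num, hP,
    _, _, _, H.isDomainWithCompactClosure_ball h0 one_pos, H.isNondegContinuum_image_plate _ _,
    H.isNondegContinuum_image_plate _ _, H.image_plate_subset_ball h0 _ (by norm_num [abs_div]),
    H.image_plate_subset_ball h0 _ (by norm_num), H.disjoint_image_plate, hmod,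
    H.modulus_pathFamily_plate_ne_top (by norm_num), hno, htop, fun C' => ?_,
    fun _ _ _ hlP => H.not_weakPoincare_one_doubleMeasure h0 hvol hlP⟩
  have hpow := (ENNReal.rpow_pos_of_nonneg hmod (by norm_num : (0 : ℝ) ≤ 1 / 3)).ne'
  simp only [htop, ENNReal.top_rpow_of_pos (by norm_num : (0 : ℝ) < 2 / 3), ENNReal.mul_top hpow,
    top_le_iff, ENNReal.ofReal_ne_top, not_false_eq_true]
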